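/- arXiv:1311.0137 — 2 statements merged into one kernel-verified Lean document; each statement's English description precedes it below -/
import Mathlib

section
/- For every λ ≥ 2, the class of λ-flat graphs is not closed under taking topological minors and is not closed under taking contractions; that is, there exist a λ-flat graph with a topological minor that is not λ-flat, and a λ-flat graph with a contraction that is not λ-flat. -/
/-!
Definitions for wall-by-wall distance, λ-flat graphs and ξ-nearly planar graphs,
following Grigoriev, Koutsonas and Thilikos, "Nearly Planar Graphs and λ-flat Graphs".

A plane graph is modelled combinatorially as a simple graph equipped with a rotation
system (a cyclic order of the edges incident to each vertex) that is planar, i.e.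
satisfies Euler's formula (with faces counted as orbits of the face-tracing successor
on darts, corrected for isolated vertices and the number of connected components).

A graph embedding in the sphere (where edges may cross, but only at points that are
not vertices) is modelled topologically by a `Drawing`: an injective placement of the
vertices on the unit sphere of `ℝ³` together with, for each edge, a simple arc joining
the images of its endpoints whose interior avoids all vertices.
-/

namespace WBW

/-- The set of edges of `G` incident to the vertex `v`. -/
def incidentSet {V : Type*} (G : SimpleGraph V) (v : V) : Set (Sym2 V) :=
  {e | e ∈ G.edgeSet ∧ v ∈ e}

/-- A simple graph together with a rotation system: for every vertex `v`, a
permutation of `Sym2 V` which fixes every non-incident edge and is a single cycle on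
the set of edges incident to `v` (the cyclic order `σ_v` of the drawing). -/
structure RotationSystem (V : Type*) where
  G : SimpleGraph V
  rot : V → Equiv.Perm (Sym2 V)
  rot_cycleOn : ∀ v, (rot v).IsCycleOn (incidentSet G v)
  rot_fixed : ∀ v, ∀ e ∉ incidentSet G v, rot v e = e

variable {V : Type*}

/-- The face-tracing successor on darts: the dart `(u,v)` is followed by the dart
leaving `v` along the edge succeeding `s(u,v)` in the cyclic order around `v`. -/
noncomputable def RotationSystem.faceNext (R : RotationSystem V) (d : R.G.Dart) :
    R.G.Dart :=
  have hmem : d.edge ∈ incidentSet R.G d.toProd.2 :=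
    ⟨d.edge_mem, by rcases d with ⟨⟨a, b⟩, h⟩; simp [SimpleGraph.Dart.edge]⟩
  have hmem' : R.rot d.toProd.2 d.edge ∈ incidentSet R.G d.toProd.2 :=
    (R.rot_cycleOn d.toProd.2).1.mapsTo hmem
  ⟨(d.toProd.2, Sym2.Mem.other hmem'.2), by
    have h := Sym2.other_spec hmem'.2
    have h2 : R.rot d.toProd.2 d.edge ∈ R.G.edgeSet := hmem'.1
    rw [← h] at h2
    exact h2⟩

/-- The number of faces of a rotation system: the number of orbits of the
face-tracing successor on darts. -/
noncomputable def RotationSystem.numFaces (R : RotationSystem V) : ℕ :=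
  Nat.card (Quot (fun a b : R.G.Dart => R.faceNext a = b))

/-- A rotation system is plane (it is an embedding of the graph in the sphere without
crossings) iff it satisfies Euler's formula, componentwise; isolated vertices are
accounted for separately, since they carry no dart. -/
def RotationSystem.IsPlane (R : RotationSystem V) : Prop :=
  Nat.card V + R.numFaces + Nat.card {v : V | ∀ w, ¬ R.G.Adj v w} =
    Nat.card R.G.edgeSet + 2 * Nat.card R.G.ConnectedComponent

/-- Two edges are attached if they share a vertex `v` and appear consecutively in the
cyclic order `σ_v` or its inverse. -/
def Attached (R : RotationSystem V) (e e' : Sym2 V) : Prop :=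
  ∃ v : V, e ∈ incidentSet R.G v ∧ e' ∈ incidentSet R.G v ∧
    (R.rot v e = e' ∨ R.rot v e' = e)

/-- A wall-by-wall walk: a nonempty sequence of distinct edges of `R.G` in which
every two consecutive edges are attached. -/
def IsWbwWalk (R : RotationSystem V) (L : List (Sym2 V)) : Prop :=
  L ≠ [] ∧ L.Nodup ∧ (∀ e ∈ L, e ∈ R.G.edgeSet) ∧ L.Chain' (Attached R)

/-- An `(x,y)`-wall-by-wall walk: a wall-by-wall walk whose first edge is incident to
`x` and whose last edge is incident to `y`. -/
def IsWbwWalkFromTo (R : RotationSystem V) (x y : V) (L : List (Sym2 V)) : Prop :=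
  IsWbwWalk R L ∧ (∃ e, L.head? = some e ∧ x ∈ e) ∧ (∃ e, L.getLast? = some e ∧ y ∈ e)

/-- The wall-by-wall distance between `x` and `y`: the least number of edges of an
`(x,y)`-wall-by-wall walk (`⊤` if there is no such walk). -/
noncomputable def wbwDist (R : RotationSystem V) (x y : V) : ℕ∞ :=
  sInf {n : ℕ∞ | ∃ L, IsWbwWalkFromTo R x y L ∧ (L.length : ℕ∞) = n}

/-- The `λ`-power of a plane graph: keep all edges and make adjacent all pairs of
vertices at wall-by-wall distance at most `λ`. -/
def RotationSystem.power (R : RotationSystem V) (l : ℕ) : SimpleGraph V :=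
  R.G ⊔ SimpleGraph.fromRel (fun x y => wbwDist R x y ≤ (l : ℕ∞))

/-- `H` is a subgraph of `G` via the injection `τ`. -/
def SubgraphVia {U V : Type*} (H : SimpleGraph U) (G : SimpleGraph V) (τ : U → V) :
    Prop :=
  Function.Injective τ ∧ ∀ x y, H.Adj x y → G.Adj (τ x) (τ y)

/-- A graph is `λ`-flat if it is a subgraph of the `λ`-power of some plane graph. -/
def IsFlat (l : ℕ) {V : Type*} (G : SimpleGraph V) : Prop :=
  ∃ (W : Type) (_ : Finite W) (R : RotationSystem W) (τ : V → W),
    R.IsPlane ∧ SubgraphVia G (R.power l) τ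

/-- The unit sphere in `ℝ³`. -/
def unitSphere : Set (EuclideanSpace ℝ (Fin 3)) := Metric.sphere 0 1

/-- A drawing (embedding) of a graph in the sphere: vertices are placed injectively,
every edge is drawn as a simple arc joining the images of its two endpoints, and the
interior of every arc avoids all vertex images (so edges may meet, away from their
endpoints, only at points that are not vertices). -/
structure Drawing {V : Type*} (G : SimpleGraph V) where
  vmap : V → unitSphere
  vmap_inj : Function.Injective vmap
  arc : Sym2 V → C(Set.Icc (0 : ℝ) 1, unitSphere)
  arc_inj : ∀ e ∈ G.edgeSet, Function.Injective (arc e)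
  arc_ends : ∀ e ∈ G.edgeSet,
    Sym2.map vmap e =
      s(arc e ⟨0, Set.mem_Icc.mpr (by norm_num)⟩, arc e ⟨1, Set.mem_Icc.mpr (by norm_num)⟩)
  interior_avoids : ∀ e ∈ G.edgeSet, ∀ t : Set.Icc (0 : ℝ) 1,
    (t : ℝ) ≠ 0 → (t : ℝ) ≠ 1 → arc e t ∉ Set.range vmap

/-- The crossings of the edge `e` in a drawing: pairs consisting of another edge `e'`
and a point, not a vertex, lying on the arcs of both `e` and `e'`. -/
def crossingSet {V : Type*} {G : SimpleGraph V} (D : Drawing G) (e : Sym2 V) :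
    Set (Sym2 V × unitSphere) :=
  {q | q.1 ∈ G.edgeSet ∧ q.1 ≠ e ∧ q.2 ∈ Set.range (D.arc e) ∧
    q.2 ∈ Set.range (D.arc q.1) ∧ q.2 ∉ Set.range D.vmap}

/-- A graph is `ξ`-nearly planar if it has a drawing in the sphere in which every
edge is crossed at most `ξ` times. -/
def IsNearlyPlanar (x : ℕ) {V : Type*} (G : SimpleGraph V) : Prop :=
  ∃ D : Drawing G, ∀ e ∈ G.edgeSet,
    (crossingSet D e).Finite ∧ (crossingSet D e).ncard ≤ x

/-- `λ(G)`: the least `λ` for which `G` is `λ`-flat. -/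
noncomputable def flatNum {V : Type*} (G : SimpleGraph V) : ℕ :=
  sInf {l | IsFlat l G}

/-- `ξ(G)`: the least `ξ` for which `G` is `ξ`-nearly planar. -/
noncomputable def nearNum {V : Type*} (G : SimpleGraph V) : ℕ :=
  sInf {x | IsNearlyPlanar x G}

/-- A graph is 3-connected if it has more than 3 vertices and removing any at most 2
vertices leaves it connected. -/
def ThreeConnected {V : Type*} (G : SimpleGraph V) : Prop :=
  3 < Nat.card V ∧ ∀ s : Set V, s.ncard ≤ 2 → (G.induce sᶜ).Connected

/-- A plane graph is triangulated if every face is bounded by a triangle, i.e. every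
orbit of the face-tracing successor has length exactly 3. -/
def RotationSystem.Triangulated (R : RotationSystem V) : Prop :=
  ∀ d : R.G.Dart, R.faceNext (R.faceNext (R.faceNext d)) = d ∧ R.faceNext d ≠ d

/-- `H` is a topological minor of `G`: some subdivision of `H` is a subgraph of `G`,
equivalently the branch vertices embed injectively into `G` and the edges of `H` are
realized by internally disjoint paths of `G` avoiding the branch vertices. -/
def IsTopMinor {U V : Type*} (H : SimpleGraph U) (G : SimpleGraph V) : Prop :=
  ∃ τ : U → V, Function.Injective τ ∧
    ∃ P : ∀ ⦃x y : U⦄, H.Adj x y → G.Walk (τ x) (τ y),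
      (∀ ⦃x y : U⦄ (h : H.Adj x y), (P h).IsPath) ∧
      (∀ ⦃x y : U⦄ (h : H.Adj x y), ∀ v ∈ (P h).support,
        v ∈ Set.range τ → v = τ x ∨ v = τ y) ∧
      (∀ ⦃x y x' y' : U⦄ (h : H.Adj x y) (h' : H.Adj x' y'), s(x, y) ≠ s(x', y') →
        ∀ v, v ∈ (P h).support → v ∈ (P h').support → v ∈ Set.range τ)

/-- `H` is a contraction of `G`: `H` is obtained from `G` by contracting edges,
equivalently there is a surjection `V(G) → V(H)` with connected fibres such that the
edges of `H` are exactly the pairs of distinct fibres joined by an edge of `G`. -/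
def IsContractionOf {U V : Type*} (H : SimpleGraph U) (G : SimpleGraph V) : Prop :=
  ∃ f : V → U, Function.Surjective f ∧
    (∀ u : U, (G.induce (f ⁻¹' {u})).Connected) ∧
    (∀ a b : U, H.Adj a b ↔ a ≠ b ∧ ∃ x y, G.Adj x y ∧ f x = a ∧ f y = b)

/-- The medial graph of a plane graph `G`: its vertices are the edges of `G`, two of
them being adjacent iff they are attached (this is the dual of the radial graph). -/
def medial (R : RotationSystem V) : SimpleGraph {e : Sym2 V // e ∈ R.G.edgeSet} :=
  SimpleGraph.fromRel (fun e f => Attached R e.1 f.1)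

/-- The `(n × n)`-grid graph. -/
def gridGraph (n : ℕ) : SimpleGraph (Fin n × Fin n) :=
  SimpleGraph.fromRel (fun a b =>
    (a.1 = b.1 ∧ (a.2 : ℕ) + 1 = (b.2 : ℕ)) ∨ (a.2 = b.2 ∧ (a.1 : ℕ) + 1 = (b.1 : ℕ)))

/-- The faces of a rotation system: orbits of the face-tracing successor on darts. -/
def RotationSystem.Face (R : RotationSystem V) : Type _ :=
  Quot (fun a b : R.G.Dart => R.faceNext a = b)

/-- The edge `e` lies on the boundary of the face `F`. -/
def EdgeOnFace (R : RotationSystem V) (e : Sym2 V) (F : R.Face) : Prop :=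
  ∃ d : R.G.Dart, Quot.mk _ d = F ∧ d.edge = e

/-- A wall-by-wall walk passes through the face `F` if two consecutive edges of the
walk both lie on the boundary of `F`. -/
def WalkThroughFace (R : RotationSystem V) (L : List (Sym2 V)) (F : R.Face) : Prop :=
  ∃ (l₁ : List (Sym2 V)) (e₁ e₂ : Sym2 V) (l₂ : List (Sym2 V)),
    L = l₁ ++ e₁ :: e₂ :: l₂ ∧ EdgeOnFace R e₁ F ∧ EdgeOnFace R e₂ F

end WBW

/-!
A complete graph on many vertices is not `λ`-flat. If it embeds in the `λ`-power of a plane graph,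
then any two of its vertices are joined by a wall-by-wall walk with at most `λ` edges. Such a walk
comes close to boundedly many vertices, so for a random choice of three hubs and three leaves, the
nine walks between them share no edges and avoid the edges at the other hubs and leaves. Choose
mod-2 paths inside the walks. As the graph is plane, the closed curve from hub `0` to hub `1`
through leaf `i` and back through leaf `j` is the coboundary of a face colouring, which we normalise
to vanish around hub `2`. A walk without edges on this curve stays on one side of it, even if it
touches the curve, because consecutive edges of the walk bound a common face. Hence the colouring
vanishes along the walk between hub `0` and the third leaf. If `f` and `g` are the colourings for
the leaves `0, 1` and `0, 2`, it follows that, around hub `0`, the product `f * g` jumps precisely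
at the edges of the path to leaf `0`, an odd number of times, which is absurd.

On the other hand, the `2`-power of a quadrangulated cylinder contains both diagonals of every
square. As these cross without sharing a vertex, rays of the two diagonal directions that leave hubs
at one end of a long cylinder can join every pair of hubs. This makes a large complete graph a
topological minor, and contracting the rays into their hubs makes it a contraction.
-/

namespace WBW

open Finset

/-! ### Mod-2 homology of plane graphs -/

theorem finrank_le_card_range {K α β : Type*} [Field K] [Finite α] (φ : α → β)
    (S : Submodule K (α → K)) (h : ∀ f ∈ S, f.FactorsThrough φ) :
    Module.finrank K S ≤ Nat.card (Set.range φ) := by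
  classical
  have := Fintype.ofFinite (Set.range φ)
  let ψ : (Set.range φ → K) →ₗ[K] (α → K) := LinearMap.funLeft K K (Set.rangeFactorization φ)
  have hS : S ≤ LinearMap.range ψ := fun f hf => by
    refine ⟨fun b => f b.2.choose, funext fun a => h f hf ?_⟩
    exact (Set.rangeFactorization φ a).2.choose_spec
  calc Module.finrank K S ≤ Module.finrank K (LinearMap.range ψ) := Submodule.finrank_mono hS
    _ ≤ Module.finrank K (Set.range φ → K) := ψ.finrank_range_le
    _ = Nat.card (Set.range φ) := by rw [Module.finrank_pi, Nat.card_eq_fintype_card]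

theorem dart_ext_of_fst_edge {V : Type*} {G : SimpleGraph V} {d d' : G.Dart}
    (hfst : d.fst = d'.fst) (hedge : d.edge = d'.edge) : d = d' := by
  rcases (SimpleGraph.dart_edge_eq_iff _ _).1 hedge with h | h
  · exact h
  · rw [h] at hfst
    exact absurd hfst.symm d'.fst_ne_snd

theorem exists_dart_of_mem_incidentSet {V : Type*} {G : SimpleGraph V} {v : V} {e : Sym2 V}
    (he : e ∈ incidentSet G v) : ∃ d : G.Dart, d.fst = v ∧ d.edge = e := by
  obtain ⟨he, hv⟩ := he
  obtain ⟨w, rfl⟩ := Sym2.mem_iff_exists.1 hv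
  exact ⟨⟨(v, w), he⟩, rfl, rfl⟩

theorem exists_dart_edge_eq {V : Type*} {G : SimpleGraph V} {e : Sym2 V} (he : e ∈ G.edgeSet) :
    ∃ d : G.Dart, d.edge = e := by
  induction e with
  | _ x y => exact ⟨⟨(x, y), he⟩, rfl⟩

theorem dart_edge_mem_incidentSet {V : Type*} {G : SimpleGraph V} (d : G.Dart) :
    d.edge ∈ incidentSet G d.fst :=
  ⟨d.edge_mem, Sym2.mem_mk_left _ _⟩

/-- The mod-2 boundary of the set of edges with characteristic function `z`. -/
def boundary {V : Type*} [Fintype V] [DecidableEq V] (G : SimpleGraph V) [DecidableRel G.Adj]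
    (z : Sym2 V → ZMod 2) (v : V) : ZMod 2 :=
  ∑ d : G.Dart with d.fst = v, z d.edge

/-- The vertex-edge incidence matrix of `G` over `ZMod 2`, with columns indexed by the edges. -/
def incidenceMatrix {V : Type*} [DecidableEq V] (G : SimpleGraph V) [DecidableRel G.Adj] :
    Matrix V G.edgeSet (ZMod 2) :=
  (G.incMatrix (ZMod 2)).submatrix id (↑)

section incidenceMatrix

variable {V : Type*} [Fintype V] [DecidableEq V] (G : SimpleGraph V) [DecidableRel G.Adj]

theorem incidenceMatrix_mulVec_apply (z : G.edgeSet → ZMod 2) (v : V) :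
    (incidenceMatrix G).mulVec z v = ∑ d : G.Dart with d.fst = v, z ⟨d.edge, d.edge_mem⟩ :=
  calc ∑ e : G.edgeSet, G.incMatrix (ZMod 2) v e * z e
      = ∑ e : G.edgeSet with v ∈ e.1, z e := by
        simp [SimpleGraph.incMatrix_apply', SimpleGraph.incidenceSet, Finset.sum_filter]
    _ = ∑ d : G.Dart with d.fst = v, z ⟨d.edge, d.edge_mem⟩ := by
        symm
        refine Finset.sum_bij (fun d _ => ⟨d.edge, d.edge_mem⟩) ?_ ?_ ?_ fun _ _ => rfl
        · rintro d hd
          simpa [← (mem_filter.1 hd).2] using (dart_edge_mem_incidentSet d).2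
        · intro d hd d' hd' h
          exact dart_ext_of_fst_edge ((mem_filter.1 hd).2.trans (mem_filter.1 hd').2.symm)
            (congrArg Subtype.val h)
        · rintro ⟨e, he⟩ hv
          obtain ⟨d, hd, rfl⟩ := exists_dart_of_mem_incidentSet ⟨he, (mem_filter.1 hv).2⟩
          exact ⟨d, by simpa using hd, rfl⟩

theorem incidenceMatrix_transpose_mulVec (g : V → ZMod 2) (d : G.Dart) :
    (incidenceMatrix G).transpose.mulVec g ⟨d.edge, d.edge_mem⟩ = g d.fst + g d.snd := by
  have hends : ({v | v ∈ d.edge} : Finset V) = {d.fst, d.snd} := by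
    ext v
    rw [mem_filter_univ, SimpleGraph.Dart.edge, Sym2.mem_iff, mem_insert, mem_singleton]
  calc ∑ v, G.incMatrix (ZMod 2) v d.edge * g v
      = ∑ v with v ∈ d.edge, g v := by
        simp [SimpleGraph.incMatrix_apply', SimpleGraph.incidenceSet, d.edge_mem,
          Finset.sum_filter]
    _ = g d.fst + g d.snd := by rw [hends, Finset.sum_pair d.fst_ne_snd]

theorem finrank_ker_incidenceMatrix_transpose_le :
    Module.finrank (ZMod 2) (LinearMap.ker (incidenceMatrix G).transpose.mulVecLin) ≤
      Nat.card G.ConnectedComponent := by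
  refine (finrank_le_card_range G.connectedComponentMk _ fun g hg => ?_).trans
    (Nat.card_mono (Set.toFinite _) (Set.subset_univ _) |>.trans_eq Nat.card_univ)
  have hadj {x y : V} (h : G.Adj x y) : g x = g y := CharTwo.add_eq_zero.1 <|
    (incidenceMatrix_transpose_mulVec G g ⟨(x, y), h⟩).symm.trans
      (congrFun (LinearMap.mem_ker.1 hg) _)
  intro x y hxy
  obtain ⟨p⟩ := SimpleGraph.ConnectedComponent.exact hxy
  clear hxy
  induction p with
  | nil => rfl
  | cons h _ ih => exact (hadj h).trans ih

end incidenceMatrix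

namespace RotationSystem

section rotDart

variable {V : Type*} (R : RotationSystem V)

/-- The face traversed by the dart `d`. -/
def face (d : R.G.Dart) : R.Face := Quot.mk _ d

theorem face_faceNext (d : R.G.Dart) : R.face (R.faceNext d) = R.face d :=
  (Quot.sound (r := fun a b : R.G.Dart => R.faceNext a = b) rfl).symm

/-- The dart following `d` in the cyclic order around its origin. -/
noncomputable def rotDart (d : R.G.Dart) : R.G.Dart := R.faceNext d.symm

@[simp] theorem rotDart_fst (d : R.G.Dart) : (R.rotDart d).fst = d.fst := rfl

@[simp] theorem rotDart_edge (d : R.G.Dart) : (R.rotDart d).edge = R.rot d.fst d.edge := by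
  rw [← d.edge_symm]
  exact Sym2.other_spec _

@[simp] theorem face_rotDart (d : R.G.Dart) : R.face (R.rotDart d) = R.face d.symm :=
  R.face_faceNext d.symm

theorem rotDart_injective : Function.Injective R.rotDart := by
  intro d d' h
  have hfst : d.fst = d'.fst := by simpa using congrArg (·.fst) h
  have hedge : R.rot d.fst d.edge = R.rot d'.fst d'.edge := by
    rw [← rotDart_edge, ← rotDart_edge, h]
  rw [hfst] at hedge
  exact dart_ext_of_fst_edge hfst ((R.rot d'.fst).injective hedge)

theorem iterate_rotDart_fst (m : ℕ) (d : R.G.Dart) : (R.rotDart^[m] d).fst = d.fst := by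
  induction m generalizing d with
  | zero => rfl
  | succ _ ih => exact ih (R.rotDart d)

theorem iterate_rotDart_edge (m : ℕ) (d : R.G.Dart) :
    (R.rotDart^[m] d).edge = (R.rot d.fst ^ m) d.edge := by
  induction m generalizing d with
  | zero => rfl
  | succ _ ih => simp [ih, pow_succ]

theorem exists_iterate_rotDart_eq [Finite V] {d d' : R.G.Dart} (h : d.fst = d'.fst) :
    ∃ m, R.rotDart^[m] d = d' := by
  obtain ⟨m, hm⟩ := (R.rot_cycleOn d.fst).exists_pow_eq' (Set.toFinite _)
    (dart_edge_mem_incidentSet d) (h ▸ dart_edge_mem_incidentSet d')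
  exact ⟨m, dart_ext_of_fst_edge ((R.iterate_rotDart_fst m d).trans h)
    ((R.iterate_rotDart_edge m d).trans hm)⟩

/-- The face colouring `f` takes the same value on the two sides of the edge `e`. -/
def SameSides {α : Type*} (f : R.Face → α) (e : Sym2 V) : Prop :=
  ∀ d : R.G.Dart, d.edge = e → f (R.face d) = f (R.face d.symm)

variable {R}

theorem SameSides.face_eq_of_fst_eq [Finite V] {α : Type*} {f : R.Face → α} {d d' : R.G.Dart}
    (hf : ∀ e ∈ incidentSet R.G d.fst, R.SameSides f e) (h : d.fst = d'.fst) :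
    f (R.face d) = f (R.face d') := by
  obtain ⟨m, rfl⟩ := R.exists_iterate_rotDart_eq h
  clear h
  induction m generalizing d with
  | zero => rfl
  | succ m ih =>
    rw [hf _ (dart_edge_mem_incidentSet d) d rfl, ← R.face_rotDart, Function.iterate_succ_apply]
    exact ih hf

theorem SameSides.face_eq_of_reachable [Finite V] {α : Type*} {f : R.Face → α}
    (hf : ∀ e ∈ R.G.edgeSet, R.SameSides f e) {d d' : R.G.Dart}
    (h : R.G.Reachable d.fst d'.fst) : f (R.face d) = f (R.face d') := by
  obtain ⟨p⟩ := h
  generalize hx : d.fst = x at p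
  generalize hy : d'.fst = y at p
  induction p generalizing d with
  | nil => exact face_eq_of_fst_eq (fun e he => hf e he.1) (hx.trans hy.symm)
  | @cons x w _ hxw _ ih =>
    calc f (R.face d) = f (R.face ⟨(x, w), hxw⟩) :=
          face_eq_of_fst_eq (fun e he => hf e he.1) hx
      _ = f (R.face ⟨(w, x), hxw.symm⟩) := hf _ hxw ⟨(x, w), hxw⟩ rfl
      _ = f (R.face d') := ih rfl hy

variable (R)

/-- The connected component around which a face is traversed. -/
def faceComponent : R.Face → R.G.ConnectedComponent :=
  Quot.lift (fun d => R.G.connectedComponentMk d.fst) fun d _ h =>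
    h ▸ SimpleGraph.ConnectedComponent.sound d.adj.reachable

theorem card_isolated_add_card_range_faceComponent_le [Finite V] :
    Nat.card {v : V | ∀ w, ¬ R.G.Adj v w} + Nat.card (Set.range R.faceComponent) ≤
      Nat.card R.G.ConnectedComponent := by
  set I := {v : V | ∀ w, ¬ R.G.Adj v w}
  have heq {v w : V} (hv : v ∈ I) (h : R.G.Reachable v w) : v = w := by
    obtain ⟨p⟩ := h
    cases p with
    | nil => rfl
    | cons h _ => exact absurd h (hv _)
  have hinj : Set.InjOn R.G.connectedComponentMk I := fun v hv w _ h =>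
    heq hv (SimpleGraph.ConnectedComponent.exact h)
  have hdisj : Disjoint (R.G.connectedComponentMk '' I) (Set.range R.faceComponent) := by
    rw [Set.disjoint_left]
    rintro _ ⟨v, hv, rfl⟩ ⟨⟨d⟩, hd⟩
    obtain rfl := heq hv (SimpleGraph.ConnectedComponent.exact hd).symm
    exact hv _ d.adj
  rw [← Nat.card_image_of_injOn hinj, Nat.card_coe_set_eq, Nat.card_coe_set_eq,
    ← Set.ncard_union_eq hdisj]
  exact Set.ncard_le_card _

end rotDart

section coboundary

variable {V : Type*} [Fintype V] [DecidableEq V] (R : RotationSystem V) [DecidableRel R.G.Adj]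

theorem sum_face_add_face_symm (f : R.Face → ZMod 2) (v : V) :
    ∑ d : R.G.Dart with d.fst = v, (f (R.face d) + f (R.face d.symm)) = 0 := by
  have hsymm : ∑ d : R.G.Dart with d.fst = v, f (R.face d.symm) =
      ∑ d : R.G.Dart with d.fst = v, f (R.face d) :=
    sum_bijective R.rotDart (Finite.injective_iff_bijective.1 R.rotDart_injective)
      (by simp) (by simp)
  rw [sum_add_distrib, hsymm, CharTwo.add_self_eq_zero]

/-- The mod-2 coboundary of a face colouring: the edges whose two sides differ. -/
def coboundary : (R.Face → ZMod 2) →ₗ[ZMod 2] (R.G.edgeSet → ZMod 2) where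
  toFun f e := ∑ d : R.G.Dart with d.edge = e.1, f (R.face d)
  map_add' _ _ := funext fun _ => sum_add_distrib
  map_smul' _ _ := funext fun _ => (mul_sum _ _ _).symm

theorem coboundary_apply (f : R.Face → ZMod 2) (d : R.G.Dart) :
    R.coboundary f ⟨d.edge, d.edge_mem⟩ = f (R.face d) + f (R.face d.symm) :=
  calc ∑ d' : R.G.Dart with d'.edge = d.edge, f (R.face d')
      = f (R.face d) + f (R.face d.symm) := by
        rw [SimpleGraph.Dart.edge_fiber, sum_pair d.symm_ne.symm]

theorem range_coboundary_le :
    LinearMap.range R.coboundary ≤ LinearMap.ker (incidenceMatrix R.G).mulVecLin := by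
  rintro _ ⟨f, rfl⟩
  rw [LinearMap.mem_ker, Matrix.mulVecLin_apply]
  ext v
  simp only [incidenceMatrix_mulVec_apply, coboundary_apply]
  exact R.sum_face_add_face_symm f v

theorem finrank_ker_coboundary_le :
    Module.finrank (ZMod 2) (LinearMap.ker R.coboundary) ≤
      Nat.card (Set.range R.faceComponent) := by
  have : Finite R.Face := inferInstanceAs (Finite (Quot _))
  refine finrank_le_card_range R.faceComponent _ fun f hf => ?_
  rintro ⟨d⟩ ⟨d'⟩ h
  refine SameSides.face_eq_of_reachable (fun _ _ a _ => ?_)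
    (SimpleGraph.ConnectedComponent.exact h)
  rw [← CharTwo.add_eq_zero, ← coboundary_apply, LinearMap.mem_ker.1 hf, Pi.zero_apply]

theorem card_add_numFaces_add_finrank_ker_le :
    Nat.card V + R.numFaces + Nat.card {v : V | ∀ w, ¬ R.G.Adj v w} +
        Module.finrank (ZMod 2) (LinearMap.ker (incidenceMatrix R.G).mulVecLin) ≤
      Nat.card R.G.edgeSet + 2 * Nat.card R.G.ConnectedComponent +
        Module.finrank (ZMod 2) (LinearMap.range R.coboundary) := by
  have : Finite R.Face := inferInstanceAs (Finite (Quot _))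
  have := Fintype.ofFinite R.Face
  have hface := LinearMap.finrank_range_add_finrank_ker R.coboundary
  have hrow := LinearMap.finrank_range_add_finrank_ker (incidenceMatrix R.G).mulVecLin
  have hcol := LinearMap.finrank_range_add_finrank_ker (incidenceMatrix R.G).transpose.mulVecLin
  have hrank := Matrix.rank_transpose (incidenceMatrix R.G)
  have hcomp := finrank_ker_incidenceMatrix_transpose_le R.G
  have hiso := R.card_isolated_add_card_range_faceComponent_le
  have hker := R.finrank_ker_coboundary_le
  have hnum : R.numFaces = Nat.card R.Face := rfl
  simp only [Module.finrank_pi, ← Nat.card_eq_fintype_card, Matrix.rank] at hface hrow hcol hrank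
  omega

end coboundary

variable {V : Type*} (R : RotationSystem V)

theorem euler_le [Finite V] :
    Nat.card V + R.numFaces + Nat.card {v : V | ∀ w, ¬ R.G.Adj v w} ≤
      Nat.card R.G.edgeSet + 2 * Nat.card R.G.ConnectedComponent := by
  classical
  have := Fintype.ofFinite V
  have := R.card_add_numFaces_add_finrank_ker_le
  have := Submodule.finrank_mono R.range_coboundary_le
  omega

variable {R}

theorem IsPlane.range_coboundary [Fintype V] [DecidableEq V] [DecidableRel R.G.Adj]
    (hR : R.IsPlane) :
    LinearMap.range R.coboundary = LinearMap.ker (incidenceMatrix R.G).mulVecLin := by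
  refine Submodule.eq_of_le_of_finrank_le R.range_coboundary_le ?_
  have := R.card_add_numFaces_add_finrank_ker_le
  have : _ = _ := hR
  omega

theorem IsPlane.exists_faceColoring [Fintype V] [DecidableEq V] [DecidableRel R.G.Adj]
    (hR : R.IsPlane) {z : Sym2 V → ZMod 2} (hz : boundary R.G z = 0) :
    ∃ f : R.Face → ZMod 2, ∀ d : R.G.Dart, f (R.face d) + f (R.face d.symm) = z d.edge := by
  have hmem : (fun e : R.G.edgeSet => z e) ∈
      LinearMap.ker (incidenceMatrix R.G).mulVecLin := by
    rw [LinearMap.mem_ker, Matrix.mulVecLin_apply, ← hz]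
    exact funext fun v => incidenceMatrix_mulVec_apply R.G _ v
  rw [← hR.range_coboundary] at hmem
  obtain ⟨f, hf⟩ := hmem
  exact ⟨f, fun d => by rw [← coboundary_apply, hf]⟩

end RotationSystem

/-! ### Linkages of `K₃,₃` in plane graphs -/

namespace RotationSystem.SameSides

variable {V α : Type*} {R : RotationSystem V} {f : R.Face → α}

theorem face_eq_of_edge_eq {d d' : R.G.Dart} (hf : R.SameSides f d'.edge)
    (h : d.edge = d'.edge) : f (R.face d) = f (R.face d') := by
  rcases (SimpleGraph.dart_edge_eq_iff _ _).1 h with rfl | rfl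
  · rfl
  · exact (hf d' rfl).symm

theorem face_eq_of_attached {d d' : R.G.Dart} (hd : R.SameSides f d.edge)
    (hd' : R.SameSides f d'.edge) (h : Attached R d.edge d'.edge) :
    f (R.face d) = f (R.face d') := by
  have eq_of_rot {v : V} {a b : R.G.Dart} (ha : R.SameSides f a.edge)
      (hb : R.SameSides f b.edge) (hv : a.edge ∈ incidentSet R.G v)
      (hab : R.rot v a.edge = b.edge) : f (R.face a) = f (R.face b) := by
    obtain ⟨c, rfl, hc⟩ := exists_dart_of_mem_incidentSet hv
    rw [← hc] at ha hab
    calc f (R.face a) = f (R.face c) := ha.face_eq_of_edge_eq hc.symm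
      _ = f (R.face c.symm) := ha c rfl
      _ = f (R.face (R.rotDart c)) := by rw [face_rotDart]
      _ = f (R.face b) := hb.face_eq_of_edge_eq ((R.rotDart_edge c).trans hab)
  obtain ⟨v, hv, hv', h | h⟩ := h
  · exact eq_of_rot hd hd' hv h
  · exact (eq_of_rot hd' hd hv' h).symm

theorem face_eq_of_isChain_attached {L : List (Sym2 V)} (hL : L.IsChain (Attached R))
    (hmem : ∀ e ∈ L, e ∈ R.G.edgeSet) (hf : ∀ e ∈ L, R.SameSides f e) {d d' : R.G.Dart}
    (hd : d.edge ∈ L) (hd' : d'.edge ∈ L) : f (R.face d) = f (R.face d') := by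
  suffices h : ∃ c, ∀ a : R.G.Dart, a.edge ∈ L → f (R.face a) = c by
    obtain ⟨c, hc⟩ := h
    rw [hc d hd, hc d' hd']
  clear hd hd'
  induction L with
  | nil => exact ⟨f (R.face d), by simp⟩
  | cons e L ih =>
    simp only [List.forall_mem_cons] at hmem hf
    obtain ⟨a, rfl⟩ := exists_dart_edge_eq hmem.1
    cases L with
    | nil => exact ⟨f (R.face a), fun b hb => hf.1.face_eq_of_edge_eq (List.mem_singleton.1 hb)⟩
    | cons e' L =>
      obtain ⟨c, hc⟩ := ih hL.tail hmem.2 hf.2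
      obtain ⟨b, rfl⟩ := exists_dart_edge_eq (hmem.2 e' List.mem_cons_self)
      refine ⟨c, fun a' ha' => (List.mem_cons.1 ha').elim (fun h => ?_) (hc a')⟩
      calc f (R.face a') = f (R.face a) := hf.1.face_eq_of_edge_eq h
        _ = f (R.face b) :=
          hf.1.face_eq_of_attached (hf.2 _ List.mem_cons_self) (List.isChain_cons_cons.1 hL).1
        _ = c := hc b List.mem_cons_self

end RotationSystem.SameSides

section boundary

variable {V : Type*} [Fintype V] [DecidableEq V] {G : SimpleGraph V} [DecidableRel G.Adj]

theorem boundary_add (z z' : Sym2 V → ZMod 2) :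
    boundary G (z + z') = boundary G z + boundary G z' :=
  funext fun _ => sum_add_distrib

theorem boundary_single {x y : V} (h : G.Adj x y) :
    boundary G (Pi.single s(x, y) 1) = Pi.single x 1 + Pi.single y 1 := by
  ext v
  let d : G.Dart := ⟨(x, y), h⟩
  calc ∑ a : G.Dart with a.fst = v, (Pi.single s(x, y) 1 : Sym2 V → ZMod 2) a.edge
      = ∑ a : G.Dart with a.edge = d.edge, if a.fst = v then 1 else 0 := by
        simp only [Pi.single_apply, ← sum_filter, filter_comm]
        rfl
    _ = (if x = v then 1 else 0) + (if y = v then 1 else 0) := by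
        rw [d.edge_fiber, sum_pair d.symm_ne.symm]
        rfl
    _ = _ := by simp [Pi.single_apply, eq_comm]

theorem exists_boundary_eq_of_mem {e : Sym2 V} (he : e ∈ G.edgeSet) {x y : V} (hx : x ∈ e)
    (hy : y ∈ e) : ∃ p : Sym2 V → ZMod 2, (∀ e' ≠ e, p e' = 0) ∧
      boundary G p = Pi.single x 1 + Pi.single y 1 := by
  rcases eq_or_ne x y with rfl | hxy
  · refine ⟨0, fun _ _ => rfl, ?_⟩
    rw [ZModModule.add_self]
    exact funext fun _ => sum_const_zero
  · obtain rfl := (Sym2.mem_and_mem_iff hxy).1 ⟨hx, hy⟩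
    exact ⟨Pi.single s(x, y) 1, fun e' h => Pi.single_eq_of_ne h 1, boundary_single he⟩

theorem exists_boundary_eq_of_isChain {R : RotationSystem V} [DecidableRel R.G.Adj]
    {L : List (Sym2 V)} (hL : L.IsChain (Attached R)) (hmem : ∀ e ∈ L, e ∈ R.G.edgeSet)
    {x y : V} (hx : ∃ e, L.head? = some e ∧ x ∈ e) (hy : ∃ e, L.getLast? = some e ∧ y ∈ e) :
    ∃ p : Sym2 V → ZMod 2, (∀ e ∉ L, p e = 0) ∧
      boundary R.G p = Pi.single x 1 + Pi.single y 1 := by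
  induction L generalizing x with
  | nil => simp at hx
  | cons e L ih =>
    simp only [List.head?_cons, Option.some.injEq, exists_eq_left', List.forall_mem_cons]
      at hx hmem
    cases L with
    | nil =>
      simp only [List.getLast?_singleton, Option.some.injEq, exists_eq_left'] at hy
      simpa using exists_boundary_eq_of_mem hmem.1 hx hy
    | cons e' L =>
      obtain ⟨v, hv, hv', -⟩ := (List.isChain_cons_cons.1 hL).1
      obtain ⟨p, hp, hbp⟩ := exists_boundary_eq_of_mem hmem.1 hx hv.2
      obtain ⟨q, hq, hbq⟩ := ih hL.tail hmem.2 ⟨e', rfl, hv'.2⟩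
        (by rwa [List.getLast?_cons_cons] at hy)
      refine ⟨p + q, fun a ha => ?_, ?_⟩
      · rw [List.mem_cons, not_or] at ha
        rw [Pi.add_apply, hp a ha.1, hq a ha.2, add_zero]
      · rw [boundary_add, hbp, hbq, ZModModule.add_add_add_cancel]

end boundary

/-- A `K₃,₃` of wall-by-wall walks: each of three hubs is linked to each of three leaves, the walks
share no edges, and no walk uses an edge at a hub or leaf which is not one of its two ends. -/
structure K33Linkage {V : Type*} (R : RotationSystem V) where
  hub : Fin 3 → V
  leaf : Fin 3 → V
  walk : Fin 3 → Fin 3 → List (Sym2 V)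
  isWalk : ∀ k i, IsWbwWalkFromTo R (hub k) (leaf i) (walk k i)
  disjoint : ∀ {k k' i i' e}, e ∈ walk k i → e ∈ walk k' i' → k = k' ∧ i = i'
  eq_of_hub_mem : ∀ {k k' i e}, e ∈ walk k i → hub k' ∈ e → k' = k
  eq_of_leaf_mem : ∀ {k i i' e}, e ∈ walk k i → leaf i' ∈ e → i' = i

namespace K33Linkage

variable {V : Type*} {R : RotationSystem V} (N : K33Linkage R)

theorem exists_dart_fst_eq_hub (k i : Fin 3) :
    ∃ d : R.G.Dart, d.fst = N.hub k ∧ d.edge ∈ N.walk k i := by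
  obtain ⟨⟨-, -, hmem, -⟩, ⟨e, he, hx⟩, -⟩ := N.isWalk k i
  have he := List.mem_of_head? he
  obtain ⟨d, hd, rfl⟩ := exists_dart_of_mem_incidentSet ⟨hmem e he, hx⟩
  exact ⟨d, hd, he⟩

theorem exists_dart_fst_eq_leaf (k i : Fin 3) :
    ∃ d : R.G.Dart, d.fst = N.leaf i ∧ d.edge ∈ N.walk k i := by
  obtain ⟨⟨-, -, hmem, -⟩, -, e, he, hx⟩ := N.isWalk k i
  have he := List.mem_of_getLast? he
  obtain ⟨d, hd, rfl⟩ := exists_dart_of_mem_incidentSet ⟨hmem e he, hx⟩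
  exact ⟨d, hd, he⟩

theorem hub_ne_leaf (k i : Fin 3) : N.hub k ≠ N.leaf i := fun h => by
  obtain ⟨d, hd, hw⟩ := N.exists_dart_fst_eq_leaf (k + 1) i
  have hmem : N.hub k ∈ d.edge := h ▸ hd ▸ (dart_edge_mem_incidentSet d).2
  simpa using N.eq_of_hub_mem hw hmem

section chain

variable [Fintype V] [DecidableEq V] [DecidableRel R.G.Adj]

theorem exists_chain (k i : Fin 3) : ∃ p : Sym2 V → ZMod 2, (∀ e ∉ N.walk k i, p e = 0) ∧
    boundary R.G p = Pi.single (N.hub k) 1 + Pi.single (N.leaf i) 1 :=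
  have ⟨⟨_, _, hmem, hL⟩, hx, hy⟩ := N.isWalk k i
  exists_boundary_eq_of_isChain hL hmem hx hy

/-- A mod-2 chain inside the walk from hub `k` to leaf `i`, with boundary these two vertices. -/
noncomputable def chain (k i : Fin 3) : Sym2 V → ZMod 2 := (N.exists_chain k i).choose

theorem chain_eq_zero {k i : Fin 3} {e : Sym2 V} (he : e ∉ N.walk k i) : N.chain k i e = 0 :=
  (N.exists_chain k i).choose_spec.1 e he

theorem boundary_chain (k i : Fin 3) :
    boundary R.G (N.chain k i) = Pi.single (N.hub k) 1 + Pi.single (N.leaf i) 1 :=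
  (N.exists_chain k i).choose_spec.2

/-- The mod-2 chain joining hub `0` to hub `1` through leaf `i`. -/
noncomputable def path (i : Fin 3) : Sym2 V → ZMod 2 := N.chain 0 i + N.chain 1 i

theorem boundary_path (i : Fin 3) :
    boundary R.G (N.path i) = Pi.single (N.hub 0) 1 + Pi.single (N.hub 1) 1 := by
  rw [path, boundary_add, boundary_chain, boundary_chain, add_comm (Pi.single (N.hub 1) 1),
    ZModModule.add_add_add_cancel]

theorem path_eq_zero {i : Fin 3} {e : Sym2 V} (he : ∀ k ≠ 2, e ∉ N.walk k i) :
    N.path i e = 0 := by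
  rw [path, Pi.add_apply, N.chain_eq_zero (he 0 (by decide)), N.chain_eq_zero (he 1 (by decide)),
    add_zero]

theorem path_eq_zero_of_hub_two_mem {i : Fin 3} {e : Sym2 V} (he : N.hub 2 ∈ e) :
    N.path i e = 0 :=
  N.path_eq_zero fun _ hk h => hk (N.eq_of_hub_mem h he).symm

theorem path_eq_zero_of_leaf_mem {i j : Fin 3} (hij : j ≠ i) {e : Sym2 V} (he : N.leaf j ∈ e) :
    N.path i e = 0 :=
  N.path_eq_zero fun _ _ h => hij (N.eq_of_leaf_mem h he)

theorem path_eq_zero_of_mem_walk {i j k : Fin 3} (hij : j ≠ i) {e : Sym2 V}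
    (he : e ∈ N.walk k j) : N.path i e = 0 :=
  N.path_eq_zero fun _ _ h => hij (N.disjoint he h).2

theorem path_eq_chain_of_hub_zero_mem {i : Fin 3} {e : Sym2 V} (he : N.hub 0 ∈ e) :
    N.path i e = N.chain 0 i e := by
  rw [path, Pi.add_apply, N.chain_eq_zero (k := 1) fun h => absurd (N.eq_of_hub_mem h he)
    (by decide), add_zero]

/-- The face colouring `f` has coboundary the closed curve `N.path i + N.path j`, and it vanishes on
the side of this curve containing hub `2`. -/
structure Separates (i j : Fin 3) (f : R.Face → ZMod 2) : Prop where
  add_eq : ∀ d : R.G.Dart,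
    f (R.face d) + f (R.face d.symm) = N.path i d.edge + N.path j d.edge
  eq_zero : ∀ d : R.G.Dart, d.fst = N.hub 2 → f (R.face d) = 0

variable {N}

theorem Separates.add {i j k : Fin 3} {f g : R.Face → ZMod 2} (hf : N.Separates i j f)
    (hg : N.Separates i k g) : N.Separates j k (f + g) where
  add_eq d := by
    rw [Pi.add_apply, Pi.add_apply, add_add_add_comm, hf.add_eq, hg.add_eq, add_add_add_comm,
      CharTwo.add_self_eq_zero, zero_add]
  eq_zero d hd := by rw [Pi.add_apply, hf.eq_zero d hd, hg.eq_zero d hd, add_zero]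

theorem sameSides_of_path_eq_zero {i j : Fin 3} {f : R.Face → ZMod 2}
    (hf : ∀ d : R.G.Dart, f (R.face d) + f (R.face d.symm) = N.path i d.edge + N.path j d.edge)
    {e : Sym2 V} (hi : N.path i e = 0) (hj : N.path j e = 0) : R.SameSides f e := by
  rintro d rfl
  rw [← CharTwo.add_eq_zero, hf, hi, hj, add_zero]

theorem Separates.eq_zero_of_mem_walk {i j k : Fin 3} (hi : k ≠ i) (hj : k ≠ j)
    {f : R.Face → ZMod 2} (hf : N.Separates i j f) {d : R.G.Dart} (hd : d.edge ∈ N.walk 0 k) :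
    f (R.face d) = 0 := by
  have hwalk (m : Fin 3) (e) (he : e ∈ N.walk m k) : R.SameSides f e :=
    sameSides_of_path_eq_zero hf.add_eq (N.path_eq_zero_of_mem_walk hi he)
      (N.path_eq_zero_of_mem_walk hj he)
  have hconst (m : Fin 3) {a b : R.G.Dart} (ha : a.edge ∈ N.walk m k)
      (hb : b.edge ∈ N.walk m k) : f (R.face a) = f (R.face b) :=
    have ⟨_, _, hmem, hL⟩ := (N.isWalk m k).1
    RotationSystem.SameSides.face_eq_of_isChain_attached hL hmem (hwalk m) ha hb
  obtain ⟨a, ha, ha'⟩ := N.exists_dart_fst_eq_hub 2 k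
  obtain ⟨b, hb, hb'⟩ := N.exists_dart_fst_eq_leaf 2 k
  obtain ⟨c, hc, hc'⟩ := N.exists_dart_fst_eq_leaf 0 k
  have hleaf (e) (he : e ∈ incidentSet R.G b.fst) : R.SameSides f e :=
    sameSides_of_path_eq_zero hf.add_eq (N.path_eq_zero_of_leaf_mem hi (hb ▸ he.2))
      (N.path_eq_zero_of_leaf_mem hj (hb ▸ he.2))
  calc f (R.face d) = f (R.face c) := hconst 0 hd hc'
    _ = f (R.face b) :=
      (RotationSystem.SameSides.face_eq_of_fst_eq hleaf (hb.trans hc.symm)).symm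
    _ = f (R.face a) := hconst 2 hb' ha'
    _ = 0 := hf.eq_zero a ha

variable (N) in
theorem exists_separates (hR : R.IsPlane) (i j : Fin 3) : ∃ f, N.Separates i j f := by
  have hclosed : boundary R.G (N.path i + N.path j) = 0 := by
    rw [boundary_add, boundary_path, boundary_path, ZModModule.add_self]
  obtain ⟨f, hf⟩ := hR.exists_faceColoring hclosed
  obtain ⟨d₀, hd₀, -⟩ := N.exists_dart_fst_eq_hub 2 0
  have hhub (e) (he : e ∈ incidentSet R.G d₀.fst) : R.SameSides f e :=
    sameSides_of_path_eq_zero hf (N.path_eq_zero_of_hub_two_mem (hd₀ ▸ he.2))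
      (N.path_eq_zero_of_hub_two_mem (hd₀ ▸ he.2))
  refine ⟨fun F => f F + f (R.face d₀), fun d => ?_, fun d hd => ?_⟩
  · rw [add_add_add_comm, CharTwo.add_self_eq_zero, add_zero, hf, Pi.add_apply]
  · rw [CharTwo.add_eq_zero]
    exact (RotationSystem.SameSides.face_eq_of_fst_eq hhub (hd₀.trans hd.symm)).symm

theorem Separates.mul_add_mul_eq_chain {f g : R.Face → ZMod 2} (hf : N.Separates 0 1 f)
    (hg : N.Separates 0 2 g) {d : R.G.Dart} (hd : d.fst = N.hub 0) :
    f (R.face d) * g (R.face d) + f (R.face d.symm) * g (R.face d.symm) =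
      N.chain 0 0 d.edge := by
  have hpath (i : Fin 3) : N.path i d.edge = N.chain 0 i d.edge :=
    N.path_eq_chain_of_hub_zero_mem (hd ▸ (dart_edge_mem_incidentSet d).2)
  have hchain {i j : Fin 3} (hij : i ≠ j) (h : d.edge ∈ N.walk 0 j) :
      N.chain 0 i d.edge = 0 := N.chain_eq_zero fun h' => hij (N.disjoint h' h).2
  have hzero {i j k : Fin 3} (hi : k ≠ i) (hj : k ≠ j) {φ : R.Face → ZMod 2}
      (hφ : N.Separates i j φ) (h : d.edge ∈ N.walk 0 k) :
      φ (R.face d) = 0 ∧ φ (R.face d.symm) = 0 :=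
    ⟨hφ.eq_zero_of_mem_walk hi hj h, hφ.eq_zero_of_mem_walk hi hj (d.edge_symm ▸ h)⟩
  have hf' := hf.add_eq d
  have hg' := hg.add_eq d
  rw [hpath, hpath] at hf' hg'
  by_cases h0 : d.edge ∈ N.walk 0 0
  · obtain ⟨h, h'⟩ := hzero (by decide) (by decide) (hf.add hg) h0
    rw [← CharTwo.add_eq_zero.1 h, ← CharTwo.add_eq_zero.1 h', ← pow_two, ← pow_two,
      ← CharTwo.add_sq, hf', hchain (i := 1) (by decide) h0, add_zero]
    generalize N.chain 0 0 d.edge = c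
    decide +revert
  rw [N.chain_eq_zero h0] at hf' hg' ⊢
  by_cases h1 : d.edge ∈ N.walk 0 1
  · obtain ⟨h, h'⟩ := hzero (by decide) (by decide) hg h1
    rw [h, h', mul_zero, mul_zero, add_zero]
  by_cases h2 : d.edge ∈ N.walk 0 2
  · obtain ⟨h, h'⟩ := hzero (by decide) (by decide) hf h2
    rw [h, h', zero_mul, zero_mul, add_zero]
  rw [N.chain_eq_zero h1, add_zero, CharTwo.add_eq_zero] at hf'
  rw [N.chain_eq_zero h2, add_zero, CharTwo.add_eq_zero] at hg'
  rw [hf', hg', CharTwo.add_self_eq_zero]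

end chain

end K33Linkage

theorem RotationSystem.IsPlane.isEmpty_K33Linkage {V : Type*} [Finite V] {R : RotationSystem V}
    (hR : R.IsPlane) : IsEmpty (K33Linkage R) := by
  classical
  have := Fintype.ofFinite V
  refine ⟨fun N => ?_⟩
  obtain ⟨f, hf⟩ := N.exists_separates hR 0 1
  obtain ⟨g, hg⟩ := N.exists_separates hR 0 2
  have hjumps : boundary R.G (N.chain 0 0) (N.hub 0) = 0 := by
    rw [← R.sum_face_add_face_symm (f * g) (N.hub 0)]
    exact sum_congr rfl fun d hd => (hf.mul_add_mul_eq_chain hg (mem_filter.1 hd).2).symm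
  simp [N.boundary_chain, (N.hub_ne_leaf 0 0).symm] at hjumps

/-! ### Complete graphs are not flat -/

section freeMap

variable {α ι : Type*} [Fintype α] [Fintype ι] {T : α → α → Finset α} {D : ℕ}

theorem card_mul_card_filter_mem_le [DecidableEq α] [DecidableEq ι] (hT : ∀ x y, #(T x y) ≤ D)
    {a b c : ι} (ha : c ≠ a) (hb : c ≠ b) :
    Fintype.card α * #{φ : ι → α | φ c ∈ T (φ a) (φ b)} ≤ D * Fintype.card (ι → α) := by
  let bad : Finset (ι → α) := {φ | φ c ∈ T (φ a) (φ b)}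
  let reset (p : α × (ι → α)) : ι → α := Function.update p.2 c p.1
  have hfibre (ψ : ι → α) : #{p ∈ univ ×ˢ bad | reset p = ψ} ≤ D := by
    refine (card_le_card_of_injOn (fun p => p.2 c) ?_ ?_).trans (hT (ψ a) (ψ b))
    · rintro ⟨x, φ⟩ hp
      obtain ⟨hφ, rfl⟩ := (by simpa [bad] using hp : φ c ∈ T (φ a) (φ b) ∧ reset (x, φ) = ψ)
      simpa [reset, ha.symm, hb.symm] using hφ
    · rintro ⟨x, φ⟩ hp ⟨y, χ⟩ hq hpq
      have hreset : reset (x, φ) = reset (y, χ) :=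
        (mem_filter.1 hp).2.trans (mem_filter.1 hq).2.symm
      refine Prod.ext (by simpa [reset] using congrFun hreset c) (funext fun i => ?_)
      rcases eq_or_ne i c with rfl | hi
      · exact hpq
      · simpa [reset, hi] using congrFun hreset i
  calc Fintype.card α * #bad = #(univ ×ˢ bad) := by rw [card_product, card_univ]
    _ ≤ D * #((univ ×ˢ bad).image reset) := card_le_mul_card_image _ D fun ψ _ => hfibre ψ
    _ ≤ D * Fintype.card (ι → α) := Nat.mul_le_mul_left _ (card_le_univ _)

/-- A uniformly random `φ` works, by a union bound over the triples `(a, b, c)`. -/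
theorem exists_forall_notMem (hT : ∀ x y, #(T x y) ≤ D)
    (hcard : Fintype.card ι ^ 3 * D < Fintype.card α) :
    ∃ φ : ι → α, ∀ a b c, c ≠ a → c ≠ b → φ c ∉ T (φ a) (φ b) := by
  classical
  by_contra! hbad
  let triples : Finset (ι × ι × ι) := {t | t.2.2 ≠ t.1 ∧ t.2.2 ≠ t.2.1}
  let bad (t : ι × ι × ι) : Finset (ι → α) := {φ | φ t.2.2 ∈ T (φ t.1) (φ t.2.1)}
  have hcover : (univ : Finset (ι → α)) ⊆ triples.biUnion bad := fun φ _ => by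
    obtain ⟨a, b, c, ha, hb, hc⟩ := hbad φ
    exact mem_biUnion.2 ⟨(a, b, c), by simp [triples, ha, hb], by simpa [bad] using hc⟩
  have htriples : #triples ≤ Fintype.card ι ^ 3 :=
    (card_le_univ _).trans_eq (by simp [pow_succ, mul_assoc])
  have : Nonempty α := Fintype.card_pos_iff.1 (by lia)
  have hlt := Nat.mul_lt_mul_of_pos_right hcard (Fintype.card_pos (α := ι → α))
  refine hlt.not_ge ?_
  calc Fintype.card α * Fintype.card (ι → α)
      ≤ Fintype.card α * ∑ t ∈ triples, #(bad t) :=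
        Nat.mul_le_mul_left _ ((card_le_card hcover).trans card_biUnion_le)
    _ = ∑ t ∈ triples, Fintype.card α * #(bad t) := mul_sum _ _ _
    _ ≤ #triples • (D * Fintype.card (ι → α)) := sum_le_card_nsmul _ _ _ fun t ht =>
        have ⟨ha, hb⟩ := (mem_filter.1 ht).2
        card_mul_card_filter_mem_le hT ha hb
    _ ≤ Fintype.card ι ^ 3 * D * Fintype.card (ι → α) := by
        rw [smul_eq_mul, mul_assoc]
        exact Nat.mul_le_mul_right _ htriples

end freeMap

section ball

variable {α : Type*} [DecidableEq α] (N : α → Finset α)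

/-- The set of points reached from `s` by at most `k` steps, where one can step from `a` to any
member of `N a`. -/
def ball (k : ℕ) (s : Finset α) : Finset α := (fun t => t ∪ t.biUnion N)^[k] s

variable {N}

theorem card_ball_le {D : ℕ} (hN : ∀ a, #(N a) ≤ D) (k : ℕ) (s : Finset α) :
    #(ball N k s) ≤ (D + 1) ^ k * #s := by
  induction k generalizing s with
  | zero => simp [ball]
  | succ k ih =>
    have hstep : #(s ∪ s.biUnion N) ≤ (D + 1) * #s := by
      have := card_biUnion_le_card_mul s N D fun a _ => hN a
      grind [card_union_le s (s.biUnion N)]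
    calc #(ball N (k + 1) s) ≤ (D + 1) ^ k * #(s ∪ s.biUnion N) := ih _
      _ ≤ (D + 1) ^ k * ((D + 1) * #s) := Nat.mul_le_mul_left _ hstep
      _ = (D + 1) ^ (k + 1) * #s := by ring

theorem subset_ball (k : ℕ) (s : Finset α) : s ⊆ ball N k s := by
  induction k generalizing s with
  | zero => exact Subset.refl s
  | succ _ ih => exact subset_union_left.trans (ih _)

theorem ball_mono_set {k : ℕ} {s t : Finset α} (h : s ⊆ t) : ball N k s ⊆ ball N k t := by
  induction k generalizing s t with
  | zero => exact h
  | succ _ ih => exact ih (union_subset_union h (biUnion_subset_biUnion_of_subset_left N h))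

theorem ball_mono_radius {k m : ℕ} (h : k ≤ m) (s : Finset α) : ball N k s ⊆ ball N m s := by
  induction k generalizing m s with
  | zero => exact subset_ball m s
  | succ k ih =>
    obtain ⟨m, rfl⟩ := Nat.exists_eq_add_of_le' (Nat.lt_of_lt_of_le k.succ_pos h)
    exact ih (Nat.le_of_succ_le_succ h) _

variable {r : α → α → Prop} (hN : ∀ ⦃a b⦄, r a b → b ∈ N a)

include hN

theorem mem_ball_of_isChain_cons {a b : α} {L : List α} (hL : (a :: L).IsChain r)
    (hb : b ∈ a :: L) : b ∈ ball N L.length {a} := by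
  induction L generalizing a with
  | nil => exact hb
  | cons c L ih =>
    obtain ⟨hac, hL⟩ := List.isChain_cons_cons.1 hL
    rcases List.mem_cons.1 hb with rfl | hb
    · exact subset_ball _ _ (mem_singleton_self b)
    · have hc : {c} ⊆ {a} ∪ ({a} : Finset α).biUnion N := by simp [hN hac]
      exact ball_mono_set (k := L.length) hc (ih hL hb)

theorem mem_ball_of_isChain (hr : ∀ ⦃a b⦄, r a b → r b a) {a b : α} {L : List α}
    (hL : L.IsChain r) (ha : a ∈ L) (hb : b ∈ L) : b ∈ ball N L.length {a} := by
  obtain ⟨s, t, rfl⟩ := List.append_of_mem ha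
  rcases List.mem_append.1 hb with hb | hb
  · have hrev : (t.reverse ++ a :: s.reverse).IsChain r := by
      simpa using List.isChain_reverse.2 (hL.imp fun _ _ h => hr h)
    exact ball_mono_radius (by simp) _
      (mem_ball_of_isChain_cons hN hrev.right_of_append (by simp [hb]))
  · exact ball_mono_radius (by simp; lia) _
      (mem_ball_of_isChain_cons hN hL.right_of_append hb)

end ball

section walks

variable {V : Type*} {R : RotationSystem V}

theorem Attached.symm {e f : Sym2 V} : Attached R e f → Attached R f e :=
  fun ⟨v, he, hf, h⟩ => ⟨v, hf, he, h.symm⟩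

theorem IsWbwWalkFromTo.reverse {x y : V} {L : List (Sym2 V)} (h : IsWbwWalkFromTo R x y L) :
    IsWbwWalkFromTo R y x L.reverse := by
  obtain ⟨⟨hne, hnd, hmem, hL⟩, hx, hy⟩ := h
  refine ⟨⟨by simpa, List.nodup_reverse.2 hnd, by simpa, ?_⟩, by simpa, by simpa⟩
  exact List.isChain_reverse.2 (hL.imp fun _ _ => Attached.symm)

theorem exists_wbwWalk_of_power_adj {l : ℕ} (hl : 1 ≤ l) {x y : V} (h : (R.power l).Adj x y) :
    ∃ L, IsWbwWalkFromTo R x y L ∧ L.length ≤ l := by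
  have of_wbwDist {x y : V} (h : wbwDist R x y ≤ l) :
      ∃ L, IsWbwWalkFromTo R x y L ∧ L.length ≤ l := by
    have hlt : wbwDist R x y < (l + 1 : ℕ) := h.trans_lt (by exact_mod_cast l.lt_succ_self)
    obtain ⟨_, ⟨L, hL, rfl⟩, hlen⟩ := sInf_lt_iff.1 hlt
    exact ⟨L, hL, Nat.le_of_lt_succ (by exact_mod_cast hlen)⟩
  rcases h with h | ⟨-, h | h⟩
  · refine ⟨[s(x, y)], ⟨⟨by simp, by simp, by simpa using h, List.isChain_singleton _⟩, ?_, ?_⟩, hl⟩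
    · exact ⟨_, rfl, Sym2.mem_mk_left x y⟩
    · exact ⟨_, rfl, Sym2.mem_mk_right x y⟩
  · exact of_wbwDist h
  · obtain ⟨L, hL, hlen⟩ := of_wbwDist h
    exact ⟨L.reverse, hL.reverse, by simpa⟩

theorem IsWbwWalkFromTo.exists_head {x y : V} {L : List (Sym2 V)}
    (h : IsWbwWalkFromTo R x y L) : ∃ e ∈ L, x ∈ e :=
  have ⟨e, he, hx⟩ := h.2.1
  ⟨e, List.mem_of_head? he, hx⟩

theorem IsWbwWalkFromTo.exists_last {x y : V} {L : List (Sym2 V)}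
    (h : IsWbwWalkFromTo R x y L) : ∃ e ∈ L, y ∈ e :=
  have ⟨e, he, hy⟩ := h.2.2
  ⟨e, List.mem_of_getLast? he, hy⟩

end walks

section attachedFinset

variable {V : Type*} [DecidableEq V] (R : RotationSystem V)

/-- The edges preceding or following `e` in the cyclic order around one of its ends. -/
def attachedFinset (e : Sym2 V) : Finset (Sym2 V) :=
  e.toFinset.biUnion fun v => {R.rot v e, (R.rot v).symm e}

variable {R}

theorem mem_attachedFinset_of_attached {e f : Sym2 V} (h : Attached R e f) :
    f ∈ attachedFinset R e := by
  obtain ⟨v, he, -, h⟩ := h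
  refine mem_biUnion.2 ⟨v, Sym2.mem_toFinset.2 he.2, ?_⟩
  rcases h with rfl | rfl <;> simp

theorem card_toFinset_le_two (e : Sym2 V) : #e.toFinset ≤ 2 := by
  rw [Sym2.card_toFinset]
  split_ifs <;> simp

variable (R) in
theorem card_attachedFinset_le (e : Sym2 V) : #(attachedFinset R e) ≤ 4 :=
  (card_biUnion_le_card_mul _ _ 2 fun _ _ => card_le_two).trans
    (Nat.mul_le_mul_right 2 (card_toFinset_le_two e))

variable {U : Type*} [Fintype U] (τ : U → V) (l : ℕ) (L : List (Sym2 V))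

variable (R) in
/-- The points of `U` whose image under `τ` is an end of an edge at most `l` attachments away from
the edges in `L`: the possible ends of wall-by-wall walks with at most `l` edges which meet `L`. -/
def interference : Finset U :=
  {z | ∃ e ∈ ball (attachedFinset R) l L.toFinset, τ z ∈ e}

variable {τ l L}

theorem card_interference_le (hτ : Function.Injective τ) :
    #(interference R τ l L) ≤ 2 * (5 ^ l * L.length) := by
  let B := ball (attachedFinset R) l L.toFinset
  calc #(interference R τ l L) = #((interference R τ l L).map ⟨τ, hτ⟩) := (card_map _).symm
    _ ≤ #(B.biUnion Sym2.toFinset) := card_le_card fun v hv => by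
        obtain ⟨z, hz, rfl⟩ := mem_map.1 hv
        simpa [interference, B] using hz
    _ ≤ #B * 2 := card_biUnion_le_card_mul _ _ 2 fun e _ => card_toFinset_le_two e
    _ ≤ 5 ^ l * #L.toFinset * 2 :=
        Nat.mul_le_mul_right 2 (card_ball_le (card_attachedFinset_le R) l _)
    _ ≤ 2 * (5 ^ l * L.length) := by
        rw [mul_comm]
        exact Nat.mul_le_mul_left 2 (Nat.mul_le_mul_left _ L.toFinset_card_le)

theorem mem_interference_of_mem {z : U} {e : Sym2 V} (he : e ∈ L) (hz : τ z ∈ e) :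
    z ∈ interference R τ l L := by
  simpa [interference] using ⟨e, subset_ball l _ (List.mem_toFinset.2 he), hz⟩

theorem mem_interference_of_isChain {L' : List (Sym2 V)} (hL' : L'.IsChain (Attached R))
    (hlen : L'.length ≤ l) {e f : Sym2 V} (he : e ∈ L) (he' : e ∈ L') (hf : f ∈ L') {z : U}
    (hz : τ z ∈ f) : z ∈ interference R τ l L := by
  have hball : f ∈ ball (attachedFinset R) L'.length {e} :=
    mem_ball_of_isChain (r := Attached R) (fun _ _ => mem_attachedFinset_of_attached)
      (fun _ _ => Attached.symm) hL' he' hf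
  have hfL : f ∈ ball (attachedFinset R) l L.toFinset :=
    ball_mono_set (by simpa using he) (ball_mono_radius hlen _ hball)
  simpa [interference] using ⟨f, hfL, hz⟩

end attachedFinset

theorem nonempty_K33Linkage_of_notMem_interference {U V : Type*} [Fintype U] [DecidableEq V]
    {R : RotationSystem V} {τ : U → V} {l : ℕ} (hub leaf : Fin 3 → U)
    {L : U → U → List (Sym2 V)}
    (hL : ∀ k i, IsWbwWalkFromTo R (τ (hub k)) (τ (leaf i)) (L (hub k) (leaf i)))
    (hlen : ∀ k i, (L (hub k) (leaf i)).length ≤ l)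
    (hhub : ∀ {k k' i}, k' ≠ k → hub k' ∉ interference R τ l (L (hub k) (leaf i)))
    (hleaf : ∀ {k i i'}, i' ≠ i → leaf i' ∉ interference R τ l (L (hub k) (leaf i))) :
    Nonempty (K33Linkage R) := by
  refine ⟨⟨τ ∘ hub, τ ∘ leaf, fun k i => L (hub k) (leaf i), hL, ?_, ?_, ?_⟩⟩
  · intro k k' i i' e he he'
    obtain ⟨f, hf, hk⟩ := (hL k' i').exists_head
    obtain ⟨g, hg, hi⟩ := (hL k' i').exists_last
    have hchain := (hL k' i').1.2.2.2
    constructor <;> by_contra hne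
    · exact hhub (Ne.symm hne)
        (mem_interference_of_isChain hchain (hlen k' i') he he' hf hk)
    · exact hleaf (Ne.symm hne)
        (mem_interference_of_isChain hchain (hlen k' i') he he' hg hi)
  · intro k k' i e he hk
    by_contra hne
    exact hhub hne (mem_interference_of_mem he hk)
  · intro k i i' e he hi
    by_contra hne
    exact hleaf hne (mem_interference_of_mem he hi)

theorem not_isFlat_top {U : Type*} [Fintype U] {l : ℕ} (hl : 1 ≤ l)
    (hU : 6 ^ 3 * (1 + 2 * (5 ^ l * l)) < Fintype.card U) : ¬ IsFlat l (⊤ : SimpleGraph U) := by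
  classical
  rintro ⟨W, hW, R, τ, hR, hτ, hadj⟩
  choose! L hL hlen using fun x y (h : x ≠ y) => exists_wbwWalk_of_power_adj hl (hadj x y h)
  let T (x y : U) : Finset U := if x = y then {x} else {x} ∪ interference R τ l (L x y)
  have hT (x y : U) : #(T x y) ≤ 1 + 2 * (5 ^ l * l) := by
    rcases eq_or_ne x y with rfl | hxy
    · simp [T]
    · calc #(T x y) ≤ 1 + #(interference R τ l (L x y)) := by
            simpa [T, hxy] using card_union_le {x} (interference R τ l (L x y))
        _ ≤ 1 + 2 * (5 ^ l * (L x y).length) := by grw [card_interference_le hτ]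
        _ ≤ 1 + 2 * (5 ^ l * l) := by grw [hlen x y hxy]
  obtain ⟨φ, hφ⟩ := exists_forall_notMem (ι := Fin 3 ⊕ Fin 3) hT (by simpa using hU)
  have hinj : Function.Injective φ := fun a b hab => by
    by_contra hne
    exact hφ a a b (Ne.symm hne) (Ne.symm hne) (by simp [T, hab])
  have hinterference {a b c} (hab : a ≠ b) (ha : c ≠ a) (hb : c ≠ b) :
      φ c ∉ interference R τ l (L (φ a) (φ b)) := fun h =>
    hφ a b c ha hb (by simp [T, hinj.ne hab, h])
  have hne (k i : Fin 3) : φ (.inl k) ≠ φ (.inr i) := hinj.ne (by simp)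
  obtain ⟨N⟩ := nonempty_K33Linkage_of_notMem_interference (φ ∘ .inl) (φ ∘ .inr)
    (fun k i => hL _ _ (hne k i)) (fun k i => hlen _ _ (hne k i))
    (fun h => hinterference (by simp) (by simpa) (by simp))
    (fun h => hinterference (by simp) (by simp) (by simpa))
  exact hR.isEmpty_K33Linkage.false N

/-! ### Plane graphs from cyclic lists of neighbours -/

section planarity

variable {V : Type*}

theorem RotationSystem.isPlane_of_connected_of_le [Finite V] {R : RotationSystem V}
    (hR : R.G.Connected) (h : Nat.card R.G.edgeSet + 2 ≤ Nat.card V + R.numFaces) :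
    R.IsPlane := by
  have hcomp : Nat.card R.G.ConnectedComponent = 1 :=
    Nat.card_eq_one_iff_unique.2 ⟨hR.preconnected.subsingleton_connectedComponent,
      hR.nonempty.map R.G.connectedComponentMk⟩
  have := R.euler_le
  rw [RotationSystem.IsPlane]
  lia

theorem RotationSystem.power_adj_of_rot_eq {R : RotationSystem V} {l : ℕ} (hl : 2 ≤ l)
    {v a b : V} (ha : R.G.Adj v a) (hb : R.G.Adj v b) (hab : a ≠ b)
    (hrot : R.rot v s(v, a) = s(v, b)) : (R.power l).Adj a b := by
  have hattached : Attached R s(v, a) s(v, b) :=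
    ⟨v, ⟨ha, Sym2.mem_mk_left v a⟩, ⟨hb, Sym2.mem_mk_left v b⟩, .inl hrot⟩
  have hedge : s(v, a) ≠ s(v, b) := mt Sym2.congr_right.1 hab
  have hwalk : IsWbwWalkFromTo R a b [s(v, a), s(v, b)] :=
    ⟨⟨by simp, List.nodup_cons.2 ⟨mt List.mem_singleton.1 hedge, List.nodup_singleton _⟩,
        by simpa using ⟨ha, hb⟩, List.isChain_pair.2 hattached⟩,
      ⟨_, rfl, Sym2.mem_mk_right v a⟩, ⟨_, rfl, Sym2.mem_mk_right v b⟩⟩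
  have hdist : wbwDist R a b ≤ (2 : ℕ) := sInf_le ⟨_, hwalk, rfl⟩
  exact .inr ⟨hab, .inl (hdist.trans (by exact_mod_cast hl))⟩

end planarity

/-- A loopless graph presented by listing the neighbours of each vertex in cyclic order. -/
structure NeighborCycles (V : Type*) where
  cycle : V → Cycle V
  nodup : ∀ v, (cycle v).Nodup
  mem_symm : ∀ {u v}, v ∈ cycle u → u ∈ cycle v
  notMem_self : ∀ v, v ∉ cycle v

namespace NeighborCycles

variable {V : Type*} (N : NeighborCycles V)

/-- The graph presented by `N`. -/
def graph : SimpleGraph V where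
  Adj u v := v ∈ N.cycle u
  symm := ⟨fun _ _ => N.mem_symm⟩
  loopless := ⟨N.notMem_self⟩

/-- The edges at `v` in cyclic order. -/
def edgeCycle (v : V) : Cycle (Sym2 V) := (N.cycle v).map fun u => s(v, u)

theorem mem_edgeCycle {v : V} {e : Sym2 V} : e ∈ N.edgeCycle v ↔ e ∈ incidentSet N.graph v := by
  refine Cycle.mem_map.trans ⟨?_, ?_⟩
  · rintro ⟨u, hu, rfl⟩
    exact ⟨hu, Sym2.mem_mk_left v u⟩
  · rintro ⟨he, u, rfl⟩
    exact ⟨u, he, rfl⟩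

theorem nodup_edgeCycle (v : V) : (N.edgeCycle v).Nodup := by
  obtain ⟨L, hL⟩ := Quotient.exists_rep (N.cycle v)
  have hnd := N.nodup v
  rw [edgeCycle, ← hL] at *
  exact List.Nodup.map (fun a b => Sym2.congr_right.1) hnd

open Classical in
/-- The graph presented by `N`, with the rotation system given by its cyclic orders. -/
noncomputable def rotationSystem : RotationSystem V where
  G := N.graph
  rot v := (N.edgeCycle v).formPerm (N.nodup_edgeCycle v)
  rot_cycleOn v := by
    have hset : incidentSet N.graph v = {e | e ∈ N.edgeCycle v} :=
      Set.ext fun e => N.mem_edgeCycle.symm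
    rw [hset]
    generalize_proofs hnd
    revert hnd
    refine Quotient.inductionOn' (N.edgeCycle v) fun L hL => ?_
    exact List.Nodup.isCycleOn_formPerm hL
  rot_fixed v e he :=
    Cycle.formPerm_eq_self_of_notMem _ _ _ (mt N.mem_edgeCycle.1 he)

variable {N}

theorem rotationSystem_adj {u v : V} : N.rotationSystem.G.Adj u v ↔ v ∈ N.cycle u := Iff.rfl

theorem rot_eq_of_cycle_eq {v a b : V} {L : List V} (h : N.cycle v = ↑(a :: b :: L)) :
    N.rotationSystem.rot v s(v, a) = s(v, b) := by
  classical
  have hcycle : N.edgeCycle v = ↑((a :: b :: L).map fun u => s(v, u)) := by rw [edgeCycle, h]; rfl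
  have hnd := N.nodup_edgeCycle v
  simp only [rotationSystem, hcycle] at hnd ⊢
  exact List.formPerm_apply_head _ _ _ hnd

theorem power_adj_of_cycle_eq {l : ℕ} (hl : 2 ≤ l) {v a b : V} {L : List V}
    (h : N.cycle v = ↑(a :: b :: L)) : (N.rotationSystem.power l).Adj a b := by
  have hnd : (a :: b :: L).Nodup := Cycle.nodup_coe_iff.1 (h ▸ N.nodup v)
  refine RotationSystem.power_adj_of_rot_eq hl (v := v) ?_ ?_ ?_ (rot_eq_of_cycle_eq h)
  · simp [rotationSystem_adj, h]
  · simp [rotationSystem_adj, h]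
  · simp_all

theorem exists_rot_eq_of_chain {v a : V} {r : V → V → Prop} (hr : (N.cycle v).Chain r)
    (ha : a ∈ N.cycle v) : ∃ b, r a b ∧ N.rotationSystem.rot v s(v, a) = s(v, b) := by
  obtain ⟨L, hL⟩ : ∃ L : List V, N.cycle v = ↑(a :: L) := by
    obtain ⟨L, hL⟩ := Quotient.exists_rep (N.cycle v)
    change (L : Cycle V) = _ at hL
    rw [← hL, Cycle.mem_coe_iff] at ha
    obtain ⟨s, t, rfl⟩ := List.append_of_mem ha
    exact ⟨t ++ s, by rw [← hL, ← List.cons_append, Cycle.coe_eq_coe]; exact List.isRotated_append⟩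
  rw [hL, Cycle.chain_coe_cons] at hr
  cases L with
  | nil =>
    refine ⟨a, by simpa using hr, ?_⟩
    have hcycle : N.edgeCycle v = ↑[s(v, a)] := by rw [edgeCycle, hL]; rfl
    simp only [rotationSystem, hcycle]
    rfl
  | cons b L => exact ⟨b, (List.isChain_cons_cons.1 hr).1, rot_eq_of_cycle_eq hL⟩

variable {α : Type*} {lab : V → V → α}

theorem lab_faceNext (hlab : ∀ v, (N.cycle v).Chain fun a b => lab a v = lab v b)
    (d : N.rotationSystem.G.Dart) :
    lab (N.rotationSystem.faceNext d).fst (N.rotationSystem.faceNext d).snd =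
      lab d.fst d.snd := by
  obtain ⟨b, hb, hrot⟩ := exists_rot_eq_of_chain (hlab d.snd) (N.mem_symm d.adj)
  have hedge : (N.rotationSystem.faceNext d).edge = s(d.snd, b) := by
    rw [← hrot]
    exact N.rotationSystem.rotDart_edge d.symm
  have : (N.rotationSystem.faceNext d).snd = b := Sym2.congr_right.1 hedge
  rw [this, hb]
  rfl

theorem card_le_numFaces [Finite V] (hlab : ∀ v, (N.cycle v).Chain fun a b => lab a v = lab v b)
    {S : Finset α} (hS : ∀ x ∈ S, ∃ u v, v ∈ N.cycle u ∧ lab u v = x) :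
    #S ≤ N.rotationSystem.numFaces := by
  classical
  have := Fintype.ofFinite V
  have : Finite N.rotationSystem.Face := Quot.finite _
  have := Fintype.ofFinite N.rotationSystem.Face
  let faceLab : N.rotationSystem.Face → α :=
    Quot.lift (fun d => lab d.fst d.snd) fun d _ h => h ▸ (lab_faceNext hlab d).symm
  have hsub : S ⊆ univ.image faceLab := by
    intro x hx
    obtain ⟨u, v, huv, rfl⟩ := hS x hx
    exact mem_image.2 ⟨N.rotationSystem.face ⟨(u, v), huv⟩, mem_univ _, rfl⟩
  calc #S ≤ #(univ : Finset N.rotationSystem.Face) := (card_le_card hsub).trans card_image_le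
    _ = N.rotationSystem.numFaces := (Nat.card_eq_fintype_card (α := N.rotationSystem.Face)).symm

theorem sum_length_cycle [Fintype V] :
    ∑ v, (N.cycle v).length = 2 * Nat.card N.rotationSystem.G.edgeSet := by
  classical
  rw [Nat.card_eq_fintype_card, ← SimpleGraph.edgeFinset_card,
    ← SimpleGraph.sum_degrees_eq_twice_card_edges]
  refine sum_congr rfl fun v _ => ?_
  obtain ⟨L, hL⟩ := Quotient.exists_rep (N.cycle v)
  change (L : Cycle V) = _ at hL
  have hnd : L.Nodup := Cycle.nodup_coe_iff.1 (hL ▸ N.nodup v)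
  have hneigh : N.rotationSystem.G.neighborFinset v = L.toFinset := by
    ext u
    simp [rotationSystem_adj, ← hL]
  rw [← SimpleGraph.card_neighborFinset_eq_degree, hneigh, List.toFinset_card_of_nodup hnd, ← hL,
    Cycle.length_coe]

end NeighborCycles

/-! ### The cylinder -/

/-- The vertices of a cylinder with `m` columns of circumference `n * w`, capped at column `0` by
`n` hubs, each of which is joined to its own block of `w` consecutive rows. -/
abbrev Cylinder (m n w : ℕ) : Type := (Fin m × ZMod (n * w)) ⊕ Fin n

namespace Cylinder

section rows

theorem add_one_ne_sub_one {k : ℕ} [Fact (2 < k)] (y : ZMod k) : y + 1 ≠ y - 1 := by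
  rw [sub_eq_add_neg]
  exact fun h => ZMod.neg_one_ne_one (add_left_cancel h).symm

variable {n w : ℕ}

/-- The row at position `i` of the block of the hub `a`. -/
def row (a : Fin n) (i : ℕ) : ZMod (n * w) := (a * w + i : ℕ)

/-- The position of a row in its block. -/
def pos : ZMod (n * w) →+* ZMod w := ZMod.castHom (dvd_mul_left w n) (ZMod w)

@[simp] theorem pos_row (a : Fin n) (i : ℕ) : pos (row a i : ZMod (n * w)) = i := by
  simp [pos, row]

theorem row_succ (a : Fin n) (i : ℕ) : (row a (i + 1) : ZMod (n * w)) = row a i + 1 := by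
  simp [row, add_assoc]

variable [NeZero n] [NeZero w]

/-- The hub whose block contains a given row. -/
def block (y : ZMod (n * w)) : Fin n :=
  ⟨y.val / w, (Nat.div_lt_iff_lt_mul (NeZero.pos w)).2 y.val_lt⟩

theorem block_row (a : Fin n) {i : ℕ} (hi : i < w) : block (row a i : ZMod (n * w)) = a := by
  have hlt : a * w + i < n * w := by nlinarith [a.2]
  have hdiv : (row a i : ZMod (n * w)).val / w = a := by
    rw [row, ZMod.val_cast_of_lt hlt, mul_comm, Nat.mul_add_div (NeZero.pos w),
      Nat.div_eq_of_lt hi, add_zero]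
  exact Fin.ext hdiv

theorem row_injective {a b : Fin n} {i j : ℕ} (hi : i < w) (hj : j < w)
    (h : (row a i : ZMod (n * w)) = row b j) : a = b ∧ i = j := by
  have hpos : (i : ZMod w) = j := by rw [← pos_row a, h, pos_row]
  rw [ZMod.natCast_eq_natCast_iff', Nat.mod_eq_of_lt hi, Nat.mod_eq_of_lt hj] at hpos
  exact ⟨by rw [← block_row a hi, h, block_row b hj], hpos⟩

theorem row_block_pos (y : ZMod (n * w)) : row (block y) (pos y).val = y := by
  rw [pos, ZMod.castHom_apply, ZMod.cast_eq_val, ZMod.val_natCast, row, block, Nat.div_add_mod',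
    ZMod.natCast_zmod_val]

end rows

section faces

variable {m n w : ℕ}

variable (m) in
/-- The face containing the cell between the columns `t - 1` and `t` and the rows `y` and `y + 1`.
`none` is the outer face, bounded by the last column, and `some none` the face between the hubs. -/
def cell (t : ℕ) (y : ZMod (n * w)) : Option (Option (Fin m × ZMod (n * w))) :=
  if h : t < m then if t = 0 ∧ pos y = -1 then some none else some (some (⟨t, h⟩, y)) else none

theorem cell_of_le {t : ℕ} (ht : m ≤ t) (y : ZMod (n * w)) : cell m t y = none :=
  dif_neg ht.not_gt

theorem cell_zero_of_pos_eq [NeZero m] {y : ZMod (n * w)} (hy : pos y = -1) :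
    cell m 0 y = some none := by
  rw [cell, dif_pos (NeZero.pos m), if_pos ⟨rfl, hy⟩]

theorem cell_of_ne [NeZero m] {t : Fin m} {y : ZMod (n * w)} (h : ¬ (t = 0 ∧ pos y = -1)) :
    cell m t y = some (some (t, y)) := by
  rw [cell, dif_pos t.2, if_neg (by simpa using h)]

/-- The face to the right of an edge of the cylinder traversed from `u` to `v`. -/
def rightFace (u v : Cylinder m n w) : Option (Option (Fin m × ZMod (n * w))) :=
  match u, v with
  | .inl (t, y), .inl (t', y') =>
      if t = t' then if y' = y + 1 then cell m (t + 1) y else cell m t y'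
      else if t < t' then cell m t' (y - 1) else cell m t y
  | .inl (_, y), .inr _ => cell m 0 y
  | .inr _, .inl (_, y) => cell m 0 (y - 1)
  | .inr _, .inr _ => none

theorem rightFace_north (t : Fin m) (y : ZMod (n * w)) :
    rightFace (.inl (t, y)) (.inl (t, y + 1)) = cell m (t + 1) y := by
  simp [rightFace]

theorem rightFace_south [Fact (2 < n * w)] (t : Fin m) (y : ZMod (n * w)) :
    rightFace (.inl (t, y + 1)) (.inl (t, y)) = cell m t y := by
  have : y ≠ y + 1 + 1 := fun h => add_one_ne_sub_one (y + 1) (by simpa using h.symm)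
  simp [rightFace, this]

end faces

variable {m n w : ℕ} [NeZero m] [NeZero n] [NeZero w]

/-- The neighbour of the grid vertex `(t, y)` on the side of the hubs. -/
def inner (t : Fin m) (y : ZMod (n * w)) : Cylinder m n w :=
  if t = 0 then .inr (block y) else .inl (⟨t - 1, by omega⟩, y)

@[simp] theorem inner_zero (y : ZMod (n * w)) : inner (0 : Fin m) y = .inr (block y) := if_pos rfl

theorem inner_of_ne_zero {t : Fin m} (ht : t ≠ 0) (y : ZMod (n * w)) :
    inner t y = .inl (⟨t - 1, by omega⟩, y) := if_neg ht

theorem inner_succ {t : ℕ} (ht : t + 1 < m) (y : ZMod (n * w)) :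
    inner (⟨t + 1, ht⟩ : Fin m) y = .inl (⟨t, by omega⟩, y) :=
  if_neg fun h => by simpa using congrArg Fin.val h

/-- The neighbours of a vertex of the cylinder in cyclic order. -/
def neighbors : Cylinder m n w → List (Cylinder m n w)
  | .inl (t, y) => .inl (t, y + 1) :: inner t y :: .inl (t, y - 1) ::
      if h : t + 1 < m then [.inl (⟨t + 1, h⟩, y)] else []
  | .inr a => (List.range w).map fun i => .inl (0, row a i)

theorem mem_neighbors_inl {t : Fin m} {y : ZMod (n * w)} {v : Cylinder m n w} :
    v ∈ neighbors (.inl (t, y)) ↔ v = .inl (t, y + 1) ∨ v = inner t y ∨ v = .inl (t, y - 1) ∨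
      ∃ h : t + 1 < m, v = .inl (⟨t + 1, h⟩, y) := by
  by_cases h : t + 1 < m <;> simp [neighbors, h]

theorem mem_neighbors_inr {a : Fin n} {v : Cylinder m n w} :
    v ∈ neighbors (.inr a) ↔ ∃ y, block y = a ∧ v = .inl (0, y) := by
  simp only [neighbors, List.mem_map, List.mem_range]
  constructor
  · rintro ⟨i, hi, rfl⟩
    exact ⟨row a i, block_row a hi, rfl⟩
  · rintro ⟨y, rfl, rfl⟩
    exact ⟨(pos y).val, ZMod.val_lt _, by rw [row_block_pos]⟩

theorem length_neighbors_inl (t : Fin m) (y : ZMod (n * w)) :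
    (neighbors (.inl (t, y) : Cylinder m n w)).length = 3 + if t + 1 < m then 1 else 0 := by
  by_cases h : t + 1 < m <;> simp [neighbors, h]

theorem length_neighbors_inr (a : Fin n) :
    (neighbors (.inr a : Cylinder m n w)).length = w := by
  simp [neighbors]

theorem mem_neighbors_symm {u v : Cylinder m n w} (h : v ∈ neighbors u) : u ∈ neighbors v := by
  rcases u with ⟨t, y⟩ | a
  · rcases mem_neighbors_inl.1 h with rfl | rfl | rfl | ⟨ht, rfl⟩
    · simp [mem_neighbors_inl]
    · by_cases ht : t = 0
      · subst ht
        exact inner_zero (m := m) y ▸ mem_neighbors_inr.2 ⟨y, rfl, rfl⟩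
      · have : (t : ℕ) - 1 + 1 = t := Nat.sub_add_cancel (Nat.one_le_iff_ne_zero.2 (by simpa))
        simp [inner_of_ne_zero ht, mem_neighbors_inl, this]
    · simp [mem_neighbors_inl]
    · simp [mem_neighbors_inl, inner_succ]
  · obtain ⟨y, rfl, rfl⟩ := mem_neighbors_inr.1 h
    simp [mem_neighbors_inl]

theorem inner_ne (t : Fin m) (y z : ZMod (n * w)) : inner t y ≠ .inl (t, z) := by
  by_cases ht : t = 0
  · simp [ht]
  · have : (t : ℕ) ≠ 0 := by simpa
    simp [inner_of_ne_zero ht, Fin.ext_iff]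
    omega

theorem rightFace_inner_right (t : Fin m) (y : ZMod (n * w)) :
    rightFace (.inl (t, y)) (inner t y) = cell m t y := by
  by_cases ht : t = 0
  · simp [ht, rightFace]
  · have hlt : (⟨t - 1, by omega⟩ : Fin m) < t := Nat.sub_one_lt (by simpa)
    simp [inner_of_ne_zero ht, rightFace, hlt.ne', hlt.not_gt]

theorem rightFace_inner_left (t : Fin m) (y : ZMod (n * w)) :
    rightFace (inner t y) (.inl (t, y)) = cell m t (y - 1) := by
  by_cases ht : t = 0
  · simp [ht, rightFace]
  · have hlt : (⟨t - 1, by omega⟩ : Fin m) < t := Nat.sub_one_lt (by simpa)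
    simp [inner_of_ne_zero ht, rightFace, hlt.ne, hlt]

variable [Fact (2 < n * w)]

instance : Fact (1 < n * w) := ⟨one_lt_two.trans Fact.out⟩

theorem notMem_neighbors_self (v : Cylinder m n w) : v ∉ neighbors v := by
  rcases v with ⟨t, y⟩ | a
  · have := (inner_ne t y y).symm
    simp [mem_neighbors_inl, Fin.ext_iff, this, eq_sub_iff_add_eq]
  · simp [mem_neighbors_inr]

theorem nodup_neighbors (v : Cylinder m n w) : (neighbors v).Nodup := by
  rcases v with ⟨t, y⟩ | a
  · have hinner := inner_ne t y
    have hsucc (h : t + 1 < m) : inner t y ≠ .inl (⟨t + 1, h⟩, y) := by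
      by_cases ht : t = 0
      · simp [ht]
      · simp [inner_of_ne_zero ht]
    by_cases h : t + 1 < m <;>
      simp [neighbors, h, hinner, hsucc, (hinner _).symm, add_one_ne_sub_one, Fin.ext_iff]
  · refine List.Nodup.map_on (fun i hi j hj hij => ?_) List.nodup_range
    exact (row_injective (List.mem_range.1 hi) (List.mem_range.1 hj) (by simpa using hij)).2

variable (m n w) in
/-- The drawing of the cylinder in the sphere. -/
def neighborCycles : NeighborCycles (Cylinder m n w) where
  cycle v := neighbors v
  nodup v := Cycle.nodup_coe_iff.2 (nodup_neighbors v)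
  mem_symm := mem_neighbors_symm
  notMem_self := notMem_neighbors_self

variable (m n w) in
/-- The rotation system of the cylinder. -/
noncomputable abbrev rotationSystem : RotationSystem (Cylinder m n w) :=
  (neighborCycles m n w).rotationSystem

theorem adj_iff {u v : Cylinder m n w} : (rotationSystem m n w).G.Adj u v ↔ v ∈ neighbors u :=
  NeighborCycles.rotationSystem_adj

theorem adj_north (t : Fin m) (y : ZMod (n * w)) :
    (rotationSystem m n w).G.Adj (.inl (t, y)) (.inl (t, y + 1)) :=
  adj_iff.2 (mem_neighbors_inl.2 (.inl rfl))

theorem adj_inner (t : Fin m) (y : ZMod (n * w)) :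
    (rotationSystem m n w).G.Adj (.inl (t, y)) (inner t y) :=
  adj_iff.2 (mem_neighbors_inl.2 (.inr (.inl rfl)))

theorem adj_hub (y : ZMod (n * w)) :
    (rotationSystem m n w).G.Adj (.inl (0, y)) (.inr (block y)) :=
  inner_zero (m := m) y ▸ adj_inner 0 y

theorem chain_rightFace_inl (t : Fin m) (y : ZMod (n * w)) :
    ((neighborCycles m n w).cycle (.inl (t, y))).Chain fun u v =>
      rightFace u (.inl (t, y)) = rightFace (.inl (t, y)) v := by
  have hnorth := (rightFace_south t y).trans (rightFace_inner_right t y).symm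
  have hinner :
      rightFace (inner t y) (.inl (t, y)) = rightFace (.inl (t, y)) (.inl (t, y - 1)) := by
    simpa using (rightFace_inner_left t y).trans (rightFace_south t (y - 1)).symm
  have hsouth : rightFace (.inl (t, y - 1)) (.inl (t, y)) = cell m (t + 1) (y - 1) := by
    have := rightFace_north t (y - 1)
    rwa [sub_add_cancel] at this
  by_cases h : t + 1 < m
  · have heast := rightFace_inner_left ⟨t + 1, h⟩ y
    have heast' := rightFace_inner_right ⟨t + 1, h⟩ y
    rw [inner_succ] at heast heast'
    simp [neighborCycles, neighbors, h, Cycle.chain_coe_cons, hnorth, hinner, hsouth, heast,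
      heast', rightFace_north]
  · simp [neighborCycles, neighbors, h, Cycle.chain_coe_cons, hnorth, hinner, hsouth,
      rightFace_north, cell_of_le (not_lt.1 h)]

theorem chain_rightFace_inr (a : Fin n) :
    ((neighborCycles m n w).cycle (.inr a)).Chain fun u v =>
      rightFace u (.inr a) = rightFace (.inr a) v := by
  obtain ⟨k, rfl⟩ := Nat.exists_eq_succ_of_ne_zero (NeZero.ne w)
  have hcycle : (neighborCycles m n (k + 1)).cycle (.inr a) =
      Cycle.map (fun i => .inl (0, row a i)) (List.range k.succ) := rfl
  rw [hcycle, Cycle.chain_map, Cycle.chain_range_succ]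
  have hlast : pos (row a k : ZMod (n * (k + 1))) = -1 := by
    rw [pos_row, eq_neg_iff_add_eq_zero]
    exact_mod_cast ZMod.natCast_self (k + 1)
  have hfirst : pos (row a 0 - 1 : ZMod (n * (k + 1))) = -1 := by simp
  refine ⟨?_, fun i _ => ?_⟩
  · simp only [rightFace, cell_zero_of_pos_eq hlast, cell_zero_of_pos_eq hfirst]
  · simp only [rightFace, row_succ, add_sub_cancel_right]

theorem chain_rightFace (v : Cylinder m n w) :
    ((neighborCycles m n w).cycle v).Chain fun u u' => rightFace u v = rightFace v u' := by
  rcases v with ⟨t, y⟩ | a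
  exacts [chain_rightFace_inl t y, chain_rightFace_inr a]

theorem exists_rightFace_eq (F : Option (Option (Fin m × ZMod (n * w))))
    (hF : ∀ a : Fin n, F ≠ some (some (0, row a (-1 : ZMod w).val))) :
    ∃ u v, v ∈ (neighborCycles m n w).cycle u ∧ rightFace u v = F := by
  rcases F with _ | _ | ⟨t, y⟩
  · have hlt : m - 1 < m := Nat.sub_one_lt (NeZero.ne m)
    refine ⟨_, _, adj_north ⟨m - 1, hlt⟩ 0, ?_⟩
    rw [rightFace_north, cell_of_le (by simp; omega)]
  · refine ⟨_, _, (adj_hub (m := m) (row (0 : Fin n) 0)).symm, ?_⟩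
    exact cell_zero_of_pos_eq (by simp)
  · refine ⟨_, _, adj_inner t y, (rightFace_inner_right t y).trans (cell_of_ne ?_)⟩
    rintro ⟨rfl, hy⟩
    exact hF (block y) (by rw [← hy, row_block_pos])

theorem le_numFaces : m * (n * w) + 2 ≤ (rotationSystem m n w).numFaces + n := by
  classical
  let T : Finset (Option (Option (Fin m × ZMod (n * w)))) :=
    univ.image fun a : Fin n => some (some (0, row a (-1 : ZMod w).val))
  have hT : #T ≤ n := card_image_le.trans (card_fin n).le
  have hfaces : #(univ \ T) ≤ (rotationSystem m n w).numFaces :=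
    NeighborCycles.card_le_numFaces chain_rightFace fun F hF =>
      exists_rightFace_eq F fun a ha => by simp [T, ha] at hF
  have hcard : #(univ : Finset (Option (Option (Fin m × ZMod (n * w))))) = m * (n * w) + 2 := by
    simp [ZMod.card]
  have := le_card_sdiff T univ
  lia

theorem card_edgeSet : Nat.card (rotationSystem m n w).G.edgeSet = 2 * (m * (n * w)) := by
  obtain ⟨k, rfl⟩ : ∃ k, m = k + 1 := Nat.exists_eq_succ_of_ne_zero (NeZero.ne m)
  have hdeg : ∑ v, (neighbors (v : Cylinder (k + 1) n w)).length = 4 * ((k + 1) * (n * w)) := by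
    simp only [Fintype.sum_sum_type, Fintype.sum_prod_type, length_neighbors_inl,
      length_neighbors_inr, Fin.sum_univ_castSucc]
    simp [ZMod.card]
    ring
  have hsum : 4 * ((k + 1) * (n * w)) = 2 * Nat.card (rotationSystem (k + 1) n w).G.edgeSet :=
    hdeg.symm.trans (neighborCycles (k + 1) n w).sum_length_cycle
  lia

theorem reachable_hub (t : Fin m) (y : ZMod (n * w)) :
    (rotationSystem m n w).G.Reachable (.inl (t, y)) (.inr (block y)) := by
  obtain ⟨t, ht⟩ := t
  induction t with
  | zero => exact (adj_hub y).reachable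
  | succ t ih => exact (inner_succ ht y ▸ adj_inner ⟨t + 1, ht⟩ y).reachable.trans (ih _)

theorem connected : (rotationSystem m n w).G.Connected := by
  have hrow (k : ℕ) : (rotationSystem m n w).G.Reachable (.inl (0, (k : ZMod (n * w))))
      (.inl (0, 0)) := by
    induction k with
    | zero => simp
    | succ k ih =>
      rw [Nat.cast_succ]
      exact (adj_north 0 _).symm.reachable.trans ih
  have hhub (a : Fin n) : (rotationSystem m n w).G.Reachable (.inr a) (.inl (0, 0)) := by
    have := (adj_hub (m := m) (row a 0)).symm.reachable.trans (hrow _)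
    rwa [block_row a (NeZero.pos w)] at this
  refine SimpleGraph.connected_iff_exists_forall_reachable _ |>.2 ⟨.inl (0, 0), ?_⟩
  rintro (⟨t, y⟩ | a)
  exacts [((reachable_hub t y).trans (hhub _)).symm, (hhub a).symm]

theorem isPlane_rotationSystem : (rotationSystem m n w).IsPlane := by
  refine RotationSystem.isPlane_of_connected_of_le connected ?_
  have hV : Nat.card (Cylinder m n w) = m * (n * w) + n := by simp [ZMod.card]
  have := le_numFaces (m := m) (n := n) (w := w)
  have := card_edgeSet (m := m) (n := n) (w := w)
  lia

end Cylinder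

/-! ### Rays -/

section complete

variable {U V : Type*} {G : SimpleGraph V}

theorem isTopMinor_of_exists_walk {H : SimpleGraph U} {τ : U → V} (hτ : Function.Injective τ)
    (S : U → U → Set V)
    (hwalk : ∀ ⦃a b⦄, H.Adj a b → ∃ p : G.Walk (τ a) (τ b), ∀ v ∈ p.support, v ∈ S a b)
    (hends : ∀ ⦃a b c⦄, τ c ∈ S a b → c = a ∨ c = b)
    (hdisj : ∀ ⦃a b a' b'⦄, s(a, b) ≠ s(a', b') → S a b ∩ S a' b' ⊆ Set.range τ) :
    IsTopMinor H G := by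
  classical
  choose P hP using hwalk
  have hbypass ⦃a b⦄ (h : H.Adj a b) : ∀ v ∈ (P h).bypass.support, v ∈ S a b :=
    fun v hv => hP h v ((P h).support_bypass_subset_support hv)
  refine ⟨τ, hτ, fun _ _ h => (P h).bypass, fun _ _ h => (P h).bypass_isPath, ?_, ?_⟩
  · rintro a b h _ hv ⟨c, rfl⟩
    exact (hends (hbypass h _ hv)).imp (congrArg τ) (congrArg τ)
  · exact fun a b a' b' h h' hne v hv hv' => hdisj hne ⟨hbypass h v hv, hbypass h' v hv'⟩

theorem isContractionOf_top {f : V → U} {root : U → V} (hroot : ∀ a, f (root a) = a)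
    (hwalk : ∀ v, ∃ p : G.Walk v (root (f v)), ∀ x ∈ p.support, f x = f v)
    (hadj : ∀ a b, ∃ x y, G.Adj x y ∧ f x = a ∧ f y = b) :
    IsContractionOf (⊤ : SimpleGraph U) G := by
  refine ⟨f, fun a => ⟨root a, hroot a⟩, fun a => ?_, fun a b => ?_⟩
  · refine SimpleGraph.connected_iff_exists_forall_reachable _ |>.2 ⟨⟨root a, hroot a⟩, ?_⟩
    rintro ⟨v, rfl⟩
    obtain ⟨p, hp⟩ := hwalk v
    exact (p.induce (f ⁻¹' {f v}) hp).reachable.symm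
  · exact ⟨fun hab => ⟨hab, hadj a b⟩, And.left⟩

end complete

theorem RotationSystem.le_power {V : Type*} (R : RotationSystem V) (l : ℕ) : R.G ≤ R.power l :=
  le_sup_left

theorem RotationSystem.IsPlane.isFlat_power {V : Type} [Finite V] {R : RotationSystem V}
    (hR : R.IsPlane) (l : ℕ) : IsFlat l (R.power l) :=
  ⟨V, inferInstance, R, id, hR, Function.injective_id, fun _ _ h => h⟩

namespace Cylinder

section diagonals

variable {m n w : ℕ} [NeZero m] [NeZero n] [NeZero w] [Fact (2 < n * w)] {l t : ℕ}

theorem power_adj_southwest (hl : 2 ≤ l) (ht : t + 1 < m) (y : ZMod (n * w)) :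
    ((rotationSystem m n w).power l).Adj (.inl (⟨t + 1, ht⟩, y)) (.inl (⟨t, by omega⟩, y - 1)) := by
  rw [← inner_succ ht, ← sub_add_cancel y 1, add_sub_cancel_right]
  exact NeighborCycles.power_adj_of_cycle_eq hl (v := .inl (⟨t + 1, ht⟩, y - 1)) rfl

theorem power_adj_northwest (hl : 2 ≤ l) (ht : t + 1 < m) (y : ZMod (n * w)) :
    ((rotationSystem m n w).power l).Adj (.inl (⟨t + 1, ht⟩, y)) (.inl (⟨t, by omega⟩, y + 1)) := by
  have h := NeighborCycles.power_adj_of_cycle_eq (N := neighborCycles m n w) hl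
    (v := .inl (⟨t + 1, ht⟩, y + 1)) (Cycle.coe_cons_eq_coe_append _ _)
  rw [inner_succ, add_sub_cancel_right] at h
  exact h.symm

end diagonals

section rays

variable {m n s : ℕ}

/-- The parity of a row. -/
def parity : ZMod (n * (2 * s)) →+* ZMod 2 :=
  ZMod.castHom (dvd_mul_of_dvd_right (dvd_mul_right 2 s) n) (ZMod 2)

/-- The row in which the ray through the grid vertex `(t, y)` reaches column `0`. Rays are
diagonals: those from even rows climb and those from odd rows descend, so every grid vertex lies on
exactly one ray although rays cross. -/
def rayOrigin (t : ℕ) (y : ZMod (n * (2 * s))) : ZMod (n * (2 * s)) :=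
  if parity y + t = 0 then y - t else y + t

theorem rayOrigin_zero (y : ZMod (n * (2 * s))) : rayOrigin 0 y = y := by
  simp [rayOrigin]

theorem rayOrigin_sub_one {t : ℕ} {y : ZMod (n * (2 * s))} (h : parity y + (t + 1 : ℕ) = 0) :
    rayOrigin t (y - 1) = rayOrigin (t + 1) y := by
  have h' : parity (y - 1) + t = 0 := by
    rw [← h, map_sub, map_one, CharTwo.sub_eq_add]
    push_cast
    ring
  rw [rayOrigin, rayOrigin, if_pos h, if_pos h']
  push_cast
  ring

theorem rayOrigin_add_one {t : ℕ} {y : ZMod (n * (2 * s))} (h : parity y + (t + 1 : ℕ) ≠ 0) :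
    rayOrigin t (y + 1) = rayOrigin (t + 1) y := by
  have h' : parity (y + 1) + t ≠ 0 := by
    convert h using 1
    rw [map_add, map_one]
    push_cast
    ring
  rw [rayOrigin, rayOrigin, if_neg h, if_neg h']
  push_cast
  ring

variable [NeZero n] [NeZero s]

variable (m) in
/-- The ray that starts in row `k`, together with the hub it ends at. -/
def ray (k : ZMod (n * (2 * s))) : Set (Cylinder m n (2 * s)) :=
  {v | v.elim (fun p => rayOrigin p.1 p.2 = k) (block k = ·)}

@[simp] theorem mem_ray_inr {a : Fin n} {k : ZMod (n * (2 * s))} :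
    .inr a ∈ ray m k ↔ block k = a := Iff.rfl

variable [NeZero m] [Fact (2 < n * (2 * s))] {l : ℕ}

theorem exists_walk_ray (hl : 2 ≤ l) (t : Fin m) {y k : ZMod (n * (2 * s))}
    (hk : rayOrigin t y = k) :
    ∃ p : ((rotationSystem m n (2 * s)).power l).Walk (.inl (t, y)) (.inr (block k)),
      ∀ v ∈ p.support, v ∈ ray m k := by
  obtain ⟨t, ht⟩ := t
  induction t generalizing y with
  | zero =>
    obtain rfl : y = k := (rayOrigin_zero y).symm.trans hk
    refine ⟨.cons (RotationSystem.le_power _ l (adj_hub y)) .nil, ?_⟩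
    rw [SimpleGraph.Walk.support_cons, List.forall_mem_cons, SimpleGraph.Walk.support_nil,
      List.forall_mem_singleton]
    exact ⟨hk, rfl⟩
  | succ t ih =>
    obtain ⟨y', horigin, hadj⟩ : ∃ y', rayOrigin t y' = rayOrigin (t + 1) y ∧
        ((rotationSystem m n (2 * s)).power l).Adj (.inl (⟨t + 1, ht⟩, y))
          (.inl (⟨t, by omega⟩, y')) := by
      by_cases h : parity y + (t + 1 : ℕ) = 0
      · exact ⟨y - 1, rayOrigin_sub_one h, power_adj_southwest hl ht y⟩
      · exact ⟨y + 1, rayOrigin_add_one h, power_adj_northwest hl ht y⟩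
    obtain ⟨p, hp⟩ := ih (by omega) (horigin.trans hk)
    refine ⟨.cons hadj p, ?_⟩
    rw [SimpleGraph.Walk.support_cons, List.forall_mem_cons]
    exact ⟨hk, hp⟩

end rays

section complete

variable {n : ℕ} {l : ℕ}

theorem exists_rayOrigin_eq (a b : Fin n) : ∃ (t : Fin (n * (2 * n))) (y : ZMod (n * (2 * n))),
    rayOrigin t y = row a (2 * b) ∧ rayOrigin t (y + 1) = row b (2 * a + 1) := by
  have hab : a * n + b < n * n := by nlinarith [a.2, b.2]
  have hba : b * n + a < n * n := by nlinarith [a.2, b.2]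
  obtain ⟨t, ht⟩ : ∃ t, t + (a * n + b) = b * n + a + n * n :=
    ⟨b * n + a + n * n - (a * n + b), by omega⟩
  have htm : t < n * (2 * n) := by nlinarith
  have heven : parity (row a (2 * b) : ZMod (n * (2 * n))) = 0 := by
    rw [row, map_natCast, ZMod.natCast_eq_zero_iff]
    exact ((dvd_mul_right 2 n).mul_left _).add (dvd_mul_right 2 _)
  obtain ⟨y, hy⟩ : ∃ y : ZMod (n * (2 * n)), y = (row a (2 * b) : ZMod (n * (2 * n))) + t :=
    ⟨_, rfl⟩
  have hclimb : parity y + t = 0 := by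
    rw [hy, map_add, heven, map_natCast, zero_add, CharTwo.add_self_eq_zero]
  have hdescend : parity (y + 1) + t ≠ 0 := by
    rw [map_add, add_right_comm, hclimb]
    simp
  refine ⟨⟨t, htm⟩, y, ?_, ?_⟩
  · rw [rayOrigin, if_pos hclimb, hy, add_sub_cancel_right]
  · have hwrap : ((n * (2 * n) : ℕ) : ZMod (n * (2 * n))) = 0 := ZMod.natCast_self _
    have ht' := congrArg (Nat.cast : ℕ → ZMod (n * (2 * n))) ht
    rw [rayOrigin, if_neg hdescend, hy, row, row]
    push_cast at hwrap ht' ⊢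
    linear_combination hwrap + 2 * ht'

variable [NeZero n]

/-- The union of the two rays that join the hubs `a` and `b`. -/
def raySegments (a b : Fin n) : Set (Cylinder (n * (2 * n)) n (2 * n)) :=
  ray _ (row a (2 * b)) ∪ ray _ (row b (2 * a + 1))

theorem inr_mem_raySegments {a b c : Fin n} : .inr c ∈ raySegments a b ↔ c = a ∨ c = b := by
  simp [raySegments, block_row a (show 2 * b.val < 2 * n by omega),
    block_row b (show 2 * a.val + 1 < 2 * n by omega), eq_comm]

theorem raySegments_inter_subset {a b a' b' : Fin n} (hne : s(a, b) ≠ s(a', b')) :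
    raySegments a b ∩ raySegments a' b' ⊆ Set.range .inr := by
  rintro (⟨t, y⟩ | c) ⟨h, h'⟩
  · refine absurd ?_ hne
    rcases h with h | h <;> rcases h' with h' | h' <;>
      obtain ⟨hhub, hpos⟩ := row_injective (by omega) (by omega) (h.symm.trans h')
    · rw [hhub, show b = b' by omega]
    · omega
    · omega
    · rw [hhub, show a = a' by omega]
  · exact ⟨c, rfl⟩

/-- The hub at the end of the ray through a vertex. -/
def rayHub : Cylinder (n * (2 * n)) n (2 * n) → Fin n :=
  Sum.elim (fun p => block (rayOrigin p.1 p.2)) id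

theorem rayHub_of_mem_ray {k : ZMod (n * (2 * n))} {v : Cylinder (n * (2 * n)) n (2 * n)}
    (hv : v ∈ ray _ k) : rayHub v = block k := by
  rcases v with ⟨t, y⟩ | a
  exacts [congrArg block hv, hv.symm]

variable [Fact (2 < n * (2 * n))]

theorem exists_walk_raySegments (hl : 2 ≤ l) (a b : Fin n) :
    ∃ p : ((rotationSystem (n * (2 * n)) n (2 * n)).power l).Walk (.inr a) (.inr b),
      ∀ v ∈ p.support, v ∈ raySegments a b := by
  obtain ⟨t, y, hy, hy'⟩ := exists_rayOrigin_eq a b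
  have hclimb := exists_walk_ray hl t hy
  have hdescend := exists_walk_ray hl t hy'
  rw [block_row a (by omega)] at hclimb
  rw [block_row b (by omega)] at hdescend
  obtain ⟨p, hp⟩ := hclimb
  obtain ⟨q, hq⟩ := hdescend
  refine ⟨p.reverse.append (.cons (RotationSystem.le_power _ l (adj_north t y)) q), ?_⟩
  intro v hv
  rw [SimpleGraph.Walk.mem_support_append_iff, SimpleGraph.Walk.support_reverse,
    List.mem_reverse, SimpleGraph.Walk.support_cons, List.mem_cons] at hv
  rcases hv with hv | rfl | hv
  exacts [.inl (hp v hv), .inl hy, .inr (hq v hv)]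

variable (n) in
theorem isTopMinor_top_power (hl : 2 ≤ l) :
    IsTopMinor (⊤ : SimpleGraph (Fin n)) ((rotationSystem (n * (2 * n)) n (2 * n)).power l) :=
  isTopMinor_of_exists_walk Sum.inr_injective raySegments
    (fun a b _ => exists_walk_raySegments hl a b) (fun _ _ _ => inr_mem_raySegments.1)
    (fun _ _ _ _ => raySegments_inter_subset)

variable (n) in
theorem isContractionOf_top_power (hl : 2 ≤ l) :
    IsContractionOf (⊤ : SimpleGraph (Fin n))
      ((rotationSystem (n * (2 * n)) n (2 * n)).power l) := by
  refine isContractionOf_top (f := rayHub) (root := .inr) (fun _ => rfl) ?_ fun a b => ?_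
  · rintro (⟨t, y⟩ | a)
    · obtain ⟨p, hp⟩ := exists_walk_ray hl t (y := y) rfl
      exact ⟨p, fun v hv => rayHub_of_mem_ray (hp v hv)⟩
    · exact ⟨.nil, fun v hv => congrArg rayHub (List.mem_singleton.1 hv)⟩
  · obtain ⟨t, y, hy, hy'⟩ := exists_rayOrigin_eq a b
    refine ⟨_, _, RotationSystem.le_power _ l (adj_north t y), ?_, ?_⟩
    · exact (congrArg block hy).trans (block_row a (by omega))
    · exact (congrArg block hy').trans (block_row b (by omega))

end complete

end Cylinder

end WBW

/-- Corollary 2, first part: for every `λ ≥ 2`, the class of `λ`-flat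
graphs is closed neither under topological minors nor under contractions. -/
theorem flat_not_closed (l : ℕ) (hl : 2 ≤ l) :
    (∃ (A B : Type) (_ : Finite A) (_ : Finite B)
        (G : SimpleGraph A) (H : SimpleGraph B),
      WBW.IsFlat l G ∧ WBW.IsTopMinor H G ∧ ¬ WBW.IsFlat l H) ∧
    (∃ (A B : Type) (_ : Finite A) (_ : Finite B)
        (G : SimpleGraph A) (H : SimpleGraph B),
      WBW.IsFlat l G ∧ WBW.IsContractionOf H G ∧ ¬ WBW.IsFlat l H) := by
  let n := 6 ^ 3 * (1 + 2 * (5 ^ l * l)) + 2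
  have hnot : ¬ WBW.IsFlat l (⊤ : SimpleGraph (Fin n)) :=
    WBW.not_isFlat_top (one_le_two.trans hl) (by rw [Fintype.card_fin]; omega)
  have : Fact (2 < n * (2 * n)) := ⟨by nlinarith [show 2 ≤ n by omega]⟩
  have hflat : WBW.IsFlat l ((WBW.Cylinder.rotationSystem (n * (2 * n)) n (2 * n)).power l) :=
    WBW.Cylinder.isPlane_rotationSystem.isFlat_power l
  exact ⟨⟨_, _, inferInstance, inferInstance, _, _, hflat,
      WBW.Cylinder.isTopMinor_top_power n hl, hnot⟩,
    ⟨_, _, inferInstance, inferInstance, _, _, hflat,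
      WBW.Cylinder.isContractionOf_top_power n hl, hnot⟩⟩
end

section
/- For every ξ ≥ 1, the class of ξ-nearly planar graphs is not closed under taking topological minors and is not closed under taking contractions; that is, there exist a ξ-nearly planar graph with a topological minor that is not ξ-nearly planar, and a ξ-nearly planar graph with a contraction that is not ξ-nearly planar. -/
/-!
A large complete graph is not `x`-nearly planar. In a drawing of it with at most `x` crossings on
each edge, six vertices can be chosen greedily so that no two independent edges among them cross;
moving one of the six to infinity by stereographic projection leaves five points in the plane,
joined by arcs. By van Kampen's parity argument two of these arcs with no common end meet: for
disjoint arcs the difference vector of their points never vanishes and so has a continuous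
logarithm, and adding up its increments over all pairs of arcs with no common end counts each half
turn in an even number of ways, although the total is odd.

On the other hand the king's graph, drawn with straight segments, is `1`-nearly planar: a diagonal
is crossed only by the other diagonal of its cell. Zigzag rows use the points with even coordinate
sum, zigzag columns those with odd sum, so rows and columns are disjoint but each row is adjacent
to each column. Contracting every row together with the column of the same index yields a complete
graph, and fans of edges from new vertices below the board allow its rows and columns to serve as
paths subdividing the edges of a complete graph.
-/

namespace WBW

open Complex Set

/-! ### Logarithms along curves -/

theorem exists_continuous_log {X : Type*} [TopologicalSpace X] [SimplyConnectedSpace X]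
    [LocallyPathConnectedSpace X] {F : X → ℂ} (hF : Continuous F) (h0 : ∀ t, F t ≠ 0) :
    ∃ L : X → ℂ, Continuous L ∧ ∀ t, exp (L t) = F t := by
  obtain ⟨t₀⟩ : Nonempty X := inferInstance
  obtain ⟨L, ⟨-, hL⟩, -⟩ := isCoveringMapOn_exp.existsUnique_continuousMap_lifts ⟨F, hF⟩
    (exp_log (h0 t₀)) h0
  exact ⟨L, L.continuous, congrFun hL⟩

theorem sub_eq_sub_of_exp_eq_mul_exp {X : Type*} [TopologicalSpace X] [PreconnectedSpace X]
    {L M : X → ℂ} (hL : Continuous L) (hM : Continuous M) {c : ℂ}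
    (h : ∀ t, exp (L t) = c * exp (M t)) (s t : X) : L s - M s = L t - M t := by
  have hshift : L = fun r ↦ M r + (L t - M t) := by
    refine isCoveringMap_exp.eq_of_comp_eq hL (by fun_prop) (funext fun r ↦ Subtype.ext ?_) t
      (by ring)
    simp [exp_add, exp_sub, h, mul_comm]
  linear_combination congrFun hshift s

open Classical in
/-- The increment over `[0, 1]` of a continuous logarithm of `F`; it is `0` if `F` has no
continuous logarithm. Its imaginary part is the angle swept by `F`. -/
noncomputable def logIncr (F : ℝ → ℂ) : ℂ :=
  if h : ∃ L : ℝ → ℂ, Continuous L ∧ ∀ t, exp (L t) = F t then h.choose 1 - h.choose 0 else 0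

theorem logIncr_eq_of_exp_eq_mul {F L : ℝ → ℂ} (hL : Continuous L) {c : ℂ}
    (h : ∀ t, exp (L t) = c * F t) : logIncr F = L 1 - L 0 := by
  have hc : c ≠ 0 := left_ne_zero_of_mul (h 0 ▸ exp_ne_zero _)
  have hlog : ∃ M : ℝ → ℂ, Continuous M ∧ ∀ t, exp (M t) = F t :=
    ⟨fun t ↦ L t - log c, by fun_prop, fun t ↦ by
      rw [exp_sub, h, exp_log hc, mul_div_cancel_left₀ _ hc]⟩
  obtain ⟨hM, hMF⟩ := hlog.choose_spec
  rw [logIncr, dif_pos hlog]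
  linear_combination sub_eq_sub_of_exp_eq_mul_exp hL hM (fun t ↦ by rw [h, hMF]) 0 1

theorem exp_logIncr {F : ℝ → ℂ} (hF : Continuous F) (h0 : ∀ t, F t ≠ 0) :
    exp (logIncr F) = F 1 / F 0 := by
  obtain ⟨L, hL, hLF⟩ := exists_continuous_log hF h0
  rw [logIncr_eq_of_exp_eq_mul hL (c := 1) (by simpa using hLF), exp_sub, hLF, hLF]

/-- A logarithm of `γ s - δ t` exists on the whole square, and its increments along the four sides
add up to zero. -/
theorem logIncr_add_logIncr_eq_of_disjoint {p q p' q' : ℂ} (γ : Path p q) (δ : Path p' q')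
    (h : Disjoint (range γ) (range δ)) :
    logIncr (γ.extend · - p') + logIncr (δ.extend · - q) =
      logIncr (γ.extend · - q') + logIncr (δ.extend · - p) := by
  have hne (z : ℝ × ℝ) : γ.extend z.1 - δ.extend z.2 ≠ 0 :=
    sub_ne_zero.2 (h.ne_of_mem (γ.extend_range ▸ mem_range_self _)
      (δ.extend_range ▸ mem_range_self _))
  obtain ⟨L, hL, hexp⟩ := exists_continuous_log
    (γ.continuous_extend.fst'.sub δ.continuous_extend.snd') hne
  rw [logIncr_eq_of_exp_eq_mul (L := fun s ↦ L (s, 0)) (c := 1) (by fun_prop) (by simp [hexp]),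
    logIncr_eq_of_exp_eq_mul (L := fun t ↦ L (1, t)) (c := -1) (by fun_prop) (by simp [hexp]),
    logIncr_eq_of_exp_eq_mul (L := fun s ↦ L (s, 1)) (c := 1) (by fun_prop) (by simp [hexp]),
    logIncr_eq_of_exp_eq_mul (L := fun t ↦ L (0, t)) (c := -1) (by fun_prop) (by simp [hexp])]
  ring

/-! ### The van Kampen obstruction of `K₅` -/

section VanKampen

variable {ι : Type*} [LinearOrder ι] {p : ι → ℂ}

/-- A choice of logarithm of `p a - p b`, skew-symmetric up to `π i`: exchanging `a < b` adds
exactly `π i`. -/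
noncomputable def pairLog (p : ι → ℂ) (a b : ι) : ℂ :=
  if a < b then log (p a - p b) else log (p b - p a) + Real.pi * I

theorem exp_pairLog {a b : ι} (hab : p a ≠ p b) : exp (pairLog p a b) = p a - p b := by
  unfold pairLog
  split_ifs
  · exact exp_log (sub_ne_zero.2 hab)
  · rw [exp_add, exp_log (sub_ne_zero.2 hab.symm), exp_pi_mul_I]
    ring

theorem pairLog_swap {a b : ι} (hab : a < b) : pairLog p b a = pairLog p a b + Real.pi * I := by
  simp [pairLog, hab, hab.not_gt]

/-- The number of turns by which `γ a b`, seen from `p w`, exceeds the angle prescribed by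
`pairLog`. The rounding only serves to extract the integer. -/
noncomputable def excessTurns (γ : ∀ a b, Path (p a) (p b)) (a b w : ι) : ℤ :=
  round ((logIncr ((γ a b).extend · - p w) - (pairLog p b w - pairLog p a w)) /
    (2 * Real.pi * I)).re

variable (γ : ∀ a b, Path (p a) (p b))

theorem logIncr_eq_pairLog_add_excessTurns {a b w : ι} (hw : p w ∉ range (γ a b)) :
    logIncr ((γ a b).extend · - p w) =
      pairLog p b w - pairLog p a w + excessTurns γ a b w * (2 * Real.pi * I) := by
  have hne (t : ℝ) : (γ a b).extend t - p w ≠ 0 :=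
    sub_ne_zero.2 fun ht ↦ hw (ht ▸ (γ a b).extend_range ▸ mem_range_self t)
  have ha : p a ≠ p w := by simpa [sub_ne_zero] using hne 0
  have hb : p b ≠ p w := by simpa [sub_ne_zero] using hne 1
  have hexp : exp (logIncr ((γ a b).extend · - p w)) = exp (pairLog p b w - pairLog p a w) := by
    rw [exp_logIncr (F := ((γ a b).extend · - p w)) (by fun_prop) hne, exp_sub,
      exp_pairLog ha, exp_pairLog hb, Path.extend_one, Path.extend_zero]
  obtain ⟨n, hn⟩ := exp_eq_exp_iff_exists_int.1 hexp
  simp [excessTurns, hn, Real.pi_ne_zero]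

theorem excessTurns_rectangle {a b c d : ι}
    (h : Disjoint (range (γ a b)) (range (γ c d))) :
    ((excessTurns γ a b c + excessTurns γ c d b - excessTurns γ a b d - excessTurns γ c d a : ℤ)
        : ℂ) * (2 * Real.pi * I) =
      (pairLog p c b - pairLog p b c) + (pairLog p a c - pairLog p c a) +
      (pairLog p d a - pairLog p a d) + (pairLog p b d - pairLog p d b) := by
  have hγ := logIncr_add_logIncr_eq_of_disjoint _ _ h
  have hc : p c ∉ range (γ a b) := h.notMem_of_mem_right ⟨0, (γ c d).source⟩
  have hd : p d ∉ range (γ a b) := h.notMem_of_mem_right ⟨1, (γ c d).target⟩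
  have ha : p a ∉ range (γ c d) := h.notMem_of_mem_left ⟨0, (γ a b).source⟩
  have hb : p b ∉ range (γ c d) := h.notMem_of_mem_left ⟨1, (γ a b).target⟩
  rw [logIncr_eq_pairLog_add_excessTurns γ hc,
    logIncr_eq_pairLog_add_excessTurns γ hd,
    logIncr_eq_pairLog_add_excessTurns γ ha,
    logIncr_eq_pairLog_add_excessTurns γ hb] at hγ
  push_cast
  linear_combination hγ

/-- Among the three ways to split `a < b < c < d` into two edges, only the interleaved one
contributes an odd number. -/
theorem odd_sum_excessTurns {a b c d : ι}
    (hab : a < b) (hbc : b < c) (hcd : c < d)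
    (h₁ : Disjoint (range (γ a b)) (range (γ c d)))
    (h₂ : Disjoint (range (γ a c)) (range (γ b d)))
    (h₃ : Disjoint (range (γ a d)) (range (γ b c))) :
    Odd ((excessTurns γ a b c + excessTurns γ a b d + excessTurns γ c d a + excessTurns γ c d b) +
      (excessTurns γ a c b + excessTurns γ a c d + excessTurns γ b d a + excessTurns γ b d c) +
      (excessTurns γ a d b + excessTurns γ a d c + excessTurns γ b c a + excessTurns γ b c d)) := by
  have hac := hab.trans hbc
  have hbd := hbc.trans hcd
  have had := hab.trans hbd
  have integer {m n : ℤ} (h : (m : ℂ) * (2 * Real.pi * I) = n * (2 * Real.pi * I)) : m = n := by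
    exact_mod_cast mul_right_cancel₀ two_pi_I_ne_zero h
  have outer := integer (n := 0) <|
    (excessTurns_rectangle γ h₁).trans <| by
      rw [pairLog_swap hbc, pairLog_swap hac, pairLog_swap had, pairLog_swap hbd]
      push_cast; ring
  have interleaved := integer (n := -1) <|
    (excessTurns_rectangle γ h₂).trans <| by
      rw [pairLog_swap hbc, pairLog_swap hab, pairLog_swap had, pairLog_swap hcd]
      push_cast; ring
  have nested := integer (n := 0) <|
    (excessTurns_rectangle γ h₃).trans <| by
      rw [pairLog_swap hbd, pairLog_swap hab, pairLog_swap hac, pairLog_swap hcd]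
      push_cast; ring
  rw [Int.odd_iff]
  omega

end VanKampen

/-- A number `excessTurns γ a b w` enters the sums for the two quadruples containing `a`, `b` and
`w`, so the five odd sums have an even total. -/
theorem exists_not_disjoint_range_of_complete_five {p : Fin 5 → ℂ}
    (γ : ∀ a b, Path (p a) (p b)) :
    ∃ a b c d : Fin 5, [a, b, c, d].Nodup ∧ ¬ Disjoint (range (γ a b)) (range (γ c d)) := by
  by_contra! h
  have odd (a b c d : Fin 5) (habcd : a < b ∧ b < c ∧ c < d) :=
    odd_sum_excessTurns γ habcd.1 habcd.2.1 habcd.2.2 (h a b c d (by grind)) (h a c b d (by grind))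
      (h a d b c (by grind))
  have h₀ := odd 1 2 3 4 (by decide)
  have h₁ := odd 0 2 3 4 (by decide)
  have h₂ := odd 0 1 3 4 (by decide)
  have h₃ := odd 0 1 2 4 (by decide)
  have h₄ := odd 0 1 2 3 (by decide)
  rw [Int.odd_iff] at h₀ h₁ h₂ h₃ h₄
  omega

/-! ### Drawings and crossings -/

section Drawings

variable {V : Type*} {G : SimpleGraph V}

theorem Drawing.exists_path (D : Drawing G) {a b : V} (h : G.Adj a b) :
    ∃ γ : Path (D.vmap a) (D.vmap b), range γ = range (D.arc s(a, b)) := by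
  rcases Sym2.eq_iff.1 (D.arc_ends s(a, b) h) with ⟨h₀, h₁⟩ | ⟨h₁, h₀⟩
  · exact ⟨⟨D.arc s(a, b), h₀.symm, h₁.symm⟩, rfl⟩
  · exact ⟨(⟨D.arc s(a, b), h₀.symm, h₁.symm⟩ : Path (D.vmap b) (D.vmap a)).symm,
      Path.symm_range _⟩

theorem Drawing.exists_path_image_arc {Y : Type*} [TopologicalSpace Y] {f : unitSphere → Y}
    (D : Drawing G) {a b : V} (h : G.Adj a b) (hf : ContinuousOn f (range (D.arc s(a, b)))) :
    ∃ γ : Path (f (D.vmap a)) (f (D.vmap b)), range γ = f '' range (D.arc s(a, b)) := by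
  obtain ⟨γ, hγ⟩ := D.exists_path h
  exact ⟨γ.map' (hγ ▸ hf), (range_comp f γ).trans (congrArg _ hγ)⟩

theorem Drawing.mem_of_vmap_mem_range_arc (D : Drawing G) {e : Sym2 V} (he : e ∈ G.edgeSet)
    {w : V} (hw : D.vmap w ∈ range (D.arc e)) : w ∈ e := by
  obtain ⟨t, ht⟩ := hw
  have hend : D.vmap w ∈ Sym2.map D.vmap e := by
    rw [D.arc_ends e he, Sym2.mem_iff, ← ht]
    by_contra! hne
    exact D.interior_avoids e he t (fun h ↦ hne.1 (congrArg _ (Subtype.ext h)))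
      (fun h ↦ hne.2 (congrArg _ (Subtype.ext h))) (ht ▸ mem_range_self w)
  obtain ⟨v, hv, hvw⟩ := Sym2.mem_map.1 hend
  exact D.vmap_inj hvw ▸ hv

/-- Two edges of `G` cross independently in `D` if they have no common endpoint and their arcs
meet. -/
def Drawing.IndepCross (D : Drawing G) (e e' : Sym2 V) : Prop :=
  e ∈ G.edgeSet ∧ e' ∈ G.edgeSet ∧ (∀ v ∈ e, v ∉ e') ∧
    ¬ Disjoint (range (D.arc e)) (range (D.arc e'))

theorem Drawing.IndepCross.symm {D : Drawing G} {e e' : Sym2 V} (h : D.IndepCross e e') :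
    D.IndepCross e' e :=
  ⟨h.2.1, h.1, fun v hv' hv ↦ h.2.2.1 v hv hv', fun hdisj ↦ h.2.2.2 hdisj.symm⟩

theorem Drawing.IndepCross.exists_mem_crossingSet {D : Drawing G} {e e' : Sym2 V}
    (h : D.IndepCross e e') : ∃ z, (e', z) ∈ crossingSet D e := by
  obtain ⟨he, he', hdisj, hmeet⟩ := h
  obtain ⟨z, hz, hz'⟩ := not_disjoint_iff.1 hmeet
  refine ⟨z, he', ?_, hz, hz', ?_⟩
  · rintro rfl
    exact hdisj _ (Sym2.out_fst_mem _) (Sym2.out_fst_mem _)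
  · rintro ⟨w, rfl⟩
    exact hdisj w (D.mem_of_vmap_mem_range_arc he hz) (D.mem_of_vmap_mem_range_arc he' hz')

theorem Drawing.encard_indepCross_le {D : Drawing G} {x : ℕ} {e : Sym2 V}
    (h : e ∈ G.edgeSet → (crossingSet D e).encard ≤ x) : {e' | D.IndepCross e e'}.encard ≤ x := by
  by_cases he : e ∈ G.edgeSet
  · have hsub : {e' | D.IndepCross e e'} ⊆ Prod.fst '' crossingSet D e := fun e' he' ↦
      let ⟨z, hz⟩ := Drawing.IndepCross.exists_mem_crossingSet he'
      ⟨(e', z), hz, rfl⟩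
    exact (encard_le_encard hsub).trans ((encard_image_le _ _).trans (h he))
  · simp [Drawing.IndepCross, he]

/-- Stereographic projection of the sphere from the pole `v` onto the complex plane. -/
noncomputable def stereographicChart (v : unitSphere) : OpenPartialHomeomorph unitSphere ℂ :=
  have : Fact (Module.finrank ℝ (EuclideanSpace ℝ (Fin 3)) = 2 + 1) := ⟨by simp⟩
  (stereographic' 2 v).transHomeomorph Complex.orthonormalBasisOneI.repr.symm.toHomeomorph

theorem stereographicChart_source (v : unitSphere) : (stereographicChart v).source = {v}ᶜ :=
  have : Fact (Module.finrank ℝ (EuclideanSpace ℝ (Fin 3)) = 2 + 1) := ⟨by simp⟩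
  stereographic'_source v

theorem stereographicChart_target (v : unitSphere) : (stereographicChart v).target = univ := by
  have : Fact (Module.finrank ℝ (EuclideanSpace ℝ (Fin 3)) = 2 + 1) := ⟨by simp⟩
  simpa [stereographicChart] using stereographic'_target v

/-- The pole of the projection is one of the six vertices; the other five form a `K₅` drawn in the
plane. -/
theorem Drawing.exists_indepCross_of_complete_six (D : Drawing G)
    (f : (⊤ : SimpleGraph (Fin 6)) →g G) :
    ∃ a b c d, D.IndepCross s(f a, f b) s(f c, f d) := by
  have hf := f.injective_of_top_hom
  let c := stereographicChart (D.vmap (f (Fin.last 5)))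
  let v (i : Fin 5) : V := f i.castSucc
  have adj {i j : Fin 5} (hij : i ≠ j) : G.Adj (v i) (v j) :=
    f.map_adj (Fin.castSucc_injective 5 |>.ne hij)
  have hsource {i j : Fin 5} (hij : i ≠ j) : range (D.arc s(v i, v j)) ⊆ c.source := by
    rw [stereographicChart_source, subset_compl_singleton_iff]
    intro hmem
    have hpole := D.mem_of_vmap_mem_range_arc (adj hij) hmem
    simp only [v, Sym2.mem_iff, hf.eq_iff] at hpole
    exact hpole.elim (Fin.castSucc_ne_last i).symm (Fin.castSucc_ne_last j).symm
  have hpath (i j : Fin 5) : ∃ γ : Path (c (D.vmap (v i))) (c (D.vmap (v j))),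
      i ≠ j → range γ = c '' range (D.arc s(v i, v j)) := by
    rcases eq_or_ne i j with rfl | hij
    · exact ⟨Path.refl _, fun h ↦ absurd rfl h⟩
    · obtain ⟨γ, hγ⟩ := D.exists_path_image_arc (adj hij) (c.continuousOn.mono (hsource hij))
      exact ⟨γ, fun _ ↦ hγ⟩
  choose γ hγ using hpath
  obtain ⟨i, j, k, l, hnodup, hmeet⟩ := exists_not_disjoint_range_of_complete_five γ
  obtain ⟨⟨hij, hik, hil⟩, ⟨hjk, hjl⟩, hkl⟩ :
      (i ≠ j ∧ i ≠ k ∧ i ≠ l) ∧ (j ≠ k ∧ j ≠ l) ∧ k ≠ l := by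
    simpa using hnodup
  rw [hγ i j hij, hγ k l hkl] at hmeet
  refine ⟨_, _, _, _, adj hij, adj hkl, ?_, fun hdisj ↦
    hmeet <| disjoint_image_image fun z hz z' hz' ↦
      (c.injOn.ne_iff (hsource hij hz) (hsource hkl hz')).2 (hdisj.ne_of_mem hz hz')⟩
  simp [hf.eq_iff, hik, hil, hjk, hjl]

end Drawings

/-! ### Complete graphs -/

section Greedy

variable {V : Type*} [Fintype V] {R : Sym2 V → Sym2 V → Prop} {x : ℕ}

theorem exists_notMem_forall_sym2_notMem (hdeg : ∀ e, {e' | R e e'}.encard ≤ x) {S : Finset V}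
    (hS : S.card + (S.card + 1).choose 2 * (x * 2) < Fintype.card V) :
    ∃ v ∉ S, ∀ e ∈ S.sym2, ∀ e', R e e' → v ∉ e' := by
  classical
  have hfin (e) : {e' | R e e'}.Finite ∧ {e' | R e e'}.ncard ≤ x :=
    encard_le_coe_iff_finite_ncard_le.1 (hdeg e)
  let N (e : Sym2 V) : Finset (Sym2 V) := (hfin e).1.toFinset
  have hN (e) : (N e).card ≤ x := ncard_eq_toFinset_card _ (hfin e).1 ▸ (hfin e).2
  have hends (e' : Sym2 V) : e'.toFinset.card ≤ 2 := by
    rw [Sym2.card_toFinset]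
    split_ifs <;> norm_num
  let bad := S ∪ S.sym2.biUnion fun e ↦ (N e).biUnion Sym2.toFinset
  have hbad : bad.card < Fintype.card V := calc
    bad.card ≤ S.card + S.sym2.card * (x * 2) :=
      (Finset.card_union_le _ _).trans <| Nat.add_le_add_left
        (Finset.card_biUnion_le_card_mul _ _ _ fun e _ ↦
          (Finset.card_biUnion_le_card_mul _ _ 2 fun e' _ ↦ hends e').trans
            (Nat.mul_le_mul_right 2 (hN e))) _
    _ < Fintype.card V := by rwa [Finset.card_sym2]
  obtain ⟨v, -, hv⟩ := Finset.exists_mem_notMem_of_card_lt_card hbad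
  simp only [bad, N, Finset.mem_union, not_or, Finset.mem_biUnion, not_exists, not_and,
    Finite.mem_toFinset, mem_ofPred_eq, Sym2.mem_toFinset] at hv
  exact ⟨v, hv⟩

theorem exists_finset_card_eq_forall_sym2_not (hsymm : ∀ {e e'}, R e e' → R e' e)
    (hdisj : ∀ {e e'}, R e e' → ∀ v ∈ e, v ∉ e') (hdeg : ∀ e, {e' | R e e'}.encard ≤ x)
    {k : ℕ} (hk : k + k.choose 2 * (x * 2) ≤ Fintype.card V) :
    ∃ S : Finset V, S.card = k ∧ ∀ e ∈ S.sym2, ∀ e' ∈ S.sym2, ¬ R e e' := by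
  classical
  induction k with
  | zero => exact ⟨∅, by simp⟩
  | succ k ih =>
    have hmono : k.choose 2 * (x * 2) ≤ (k + 1).choose 2 * (x * 2) :=
      Nat.mul_le_mul_right _ (Nat.choose_le_choose 2 k.le_succ)
    obtain ⟨S, rfl, hS⟩ := ih (by omega)
    obtain ⟨v, hvS, hv⟩ := exists_notMem_forall_sym2_notMem hdeg (S := S) (by omega)
    have mem_sym2 {e} (he : e ∈ (insert v S).sym2) (hve : v ∉ e) : e ∈ S.sym2 :=
      Finset.mem_sym2_iff.2 fun w hw ↦ Finset.mem_of_mem_insert_of_ne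
        (Finset.mem_sym2_iff.1 he w hw) (ne_of_mem_of_not_mem hw hve)
    refine ⟨insert v S, Finset.card_insert_of_notMem hvS, fun e he e' he' hR ↦ ?_⟩
    by_cases hve : v ∈ e
    · exact hv e' (mem_sym2 he' (hdisj hR v hve)) e (hsymm hR) hve
    · have he := mem_sym2 he hve
      exact hS e he e' (mem_sym2 he' (hv e he e' hR)) hR

end Greedy

theorem not_isNearlyPlanar_top {V : Type*} [Fintype V] {x : ℕ}
    (h : 30 * x + 6 ≤ Fintype.card V) : ¬ IsNearlyPlanar x (⊤ : SimpleGraph V) := by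
  rintro ⟨D, hD⟩
  obtain ⟨S, hcard, hS⟩ := exists_finset_card_eq_forall_sym2_not (R := D.IndepCross) (k := 6)
    (fun h ↦ h.symm) (fun h ↦ h.2.2.1)
    (fun e ↦ D.encard_indepCross_le fun he ↦ encard_le_coe_iff_finite_ncard_le.2 (hD e he))
    (by rw [show Nat.choose 6 2 = 15 from rfl]; omega)
  let f := (SimpleGraph.Embedding.completeGraph
    ((S.equivFinOfCardEq hcard).symm.toEmbedding.trans (Function.Embedding.subtype _)))
  obtain ⟨a, b, c, d, hcross⟩ := D.exists_indepCross_of_complete_six f.toHom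
  exact hS _ (by simp [f]) _ (by simp [f]) hcross

/-! ### Subgraphs and straight-line drawings -/

theorem isNearlyPlanar_iff_encard {V : Type*} {G : SimpleGraph V} {x : ℕ} :
    IsNearlyPlanar x G ↔ ∃ D : Drawing G, ∀ e ∈ G.edgeSet, (crossingSet D e).encard ≤ x := by
  simp only [IsNearlyPlanar, encard_le_coe_iff_finite_ncard_le]

theorem IsNearlyPlanar.mono {V : Type*} {G : SimpleGraph V} {x y : ℕ} (h : IsNearlyPlanar x G)
    (hxy : x ≤ y) : IsNearlyPlanar y G :=
  let ⟨D, hD⟩ := h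
  ⟨D, fun e he ↦ ⟨(hD e he).1, (hD e he).2.trans hxy⟩⟩

section Copy

variable {U V : Type*} {H : SimpleGraph U} {G : SimpleGraph V}

/-- The restriction of a drawing of `G` to a copy of `H` in `G`. -/
def Drawing.comap (D : Drawing G) (f : H.Copy G) : Drawing H where
  vmap := D.vmap ∘ f
  vmap_inj := D.vmap_inj.comp f.injective
  arc e := D.arc (e.map f)
  arc_inj _ he := D.arc_inj _ (f.toHom.map_mem_edgeSet he)
  arc_ends e he := Sym2.map_map (g := D.vmap) (f := f) e ▸
    D.arc_ends _ (f.toHom.map_mem_edgeSet he)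
  interior_avoids _ he t h₀ h₁ ht :=
    D.interior_avoids _ (f.toHom.map_mem_edgeSet he) t h₀ h₁ (range_comp_subset_range _ _ ht)

theorem Drawing.encard_crossingSet_comap_le (D : Drawing G) (f : H.Copy G) {e : Sym2 U}
    (he : e ∈ H.edgeSet) :
    (crossingSet (D.comap f) e).encard ≤ (crossingSet D (e.map f)).encard := by
  have hf : Function.Injective (Sym2.map f) := Sym2.map.injective f.injective
  refine encard_le_encard_of_injOn (f := Prod.map (Sym2.map f) id) ?_
    (hf.prodMap Function.injective_id).injOn
  rintro ⟨e', z⟩ ⟨he', hne, hz, hz', hvertex⟩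
  refine ⟨f.toHom.map_mem_edgeSet he', hf.ne hne, hz, hz', ?_⟩
  rintro ⟨v, rfl⟩
  obtain ⟨u, -, rfl⟩ := Sym2.mem_map.1
    (D.mem_of_vmap_mem_range_arc (f.toHom.map_mem_edgeSet he) hz)
  exact hvertex ⟨u, rfl⟩

theorem IsNearlyPlanar.of_isContained {x : ℕ} (hG : IsNearlyPlanar x G) (hHG : H.IsContained G) :
    IsNearlyPlanar x H := by
  obtain ⟨f⟩ := hHG
  obtain ⟨D, hD⟩ := isNearlyPlanar_iff_encard.1 hG
  exact isNearlyPlanar_iff_encard.2 ⟨D.comap f, fun _ he ↦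
    (D.encard_crossingSet_comap_le f he).trans (hD _ (f.toHom.map_mem_edgeSet he))⟩

end Copy

section Segments

variable {V : Type*} {G : SimpleGraph V} {p : V → ℂ}

/-- The open segment joining the endpoints of `e` when the vertices are placed at `p`. -/
def edgeInterior (p : V → ℂ) : Sym2 V → Set ℂ :=
  Sym2.lift ⟨fun a b ↦ openSegment ℝ (p a) (p b), fun _ _ ↦ openSegment_symm ℝ _ _⟩

theorem edgeInterior_map {U : Type*} (p : V → ℂ) (f : U → V) (e : Sym2 U) :
    edgeInterior p (e.map f) = edgeInterior (p ∘ f) e := by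
  induction e
  rfl

theorem lineMap_mem_edgeInterior (e : Sym2 V) {t : ℝ} (h₀ : 0 < t) (h₁ : t < 1) :
    AffineMap.lineMap (p e.out.1) (p e.out.2) t ∈ edgeInterior p e := by
  have hmem : AffineMap.lineMap (p e.out.1) (p e.out.2) t ∈ edgeInterior p s(e.out.1, e.out.2) :=
    lineMap_mem_openSegment ℝ (p e.out.1) (p e.out.2) ⟨h₀, h₁⟩
  rwa [show s(e.out.1, e.out.2) = e from Quot.out_eq e] at hmem

theorem exists_continuous_injective_unitSphere :
    ∃ φ : ℂ → unitSphere, Continuous φ ∧ Function.Injective φ := by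
  let c := stereographicChart ⟨EuclideanSpace.single 0 1, by simp [unitSphere]⟩
  have hc : c.symm.source = univ := stereographicChart_target _
  exact ⟨c.symm, continuousOn_univ.1 (hc ▸ c.symm.continuousOn), injOn_univ.1 (hc ▸ c.symm.injOn)⟩

/-- The straight-line drawing of `G` with vertices at `p`, transported to the sphere by `φ`. -/
noncomputable def Drawing.ofSegments {φ : ℂ → unitSphere} (hφ : Continuous φ)
    (hφi : Function.Injective φ) (hp : Function.Injective p)
    (hv : ∀ e ∈ G.edgeSet, ∀ w, p w ∉ edgeInterior p e) : Drawing G where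
  vmap := φ ∘ p
  vmap_inj := hφi.comp hp
  arc e := ⟨fun t ↦ φ (AffineMap.lineMap (p e.out.1) (p e.out.2) (t : ℝ)), by fun_prop⟩
  arc_inj e he := by
    have hne : e.out.1 ≠ e.out.2 := G.ne_of_adj (by rwa [← Quot.out_eq e] at he)
    exact hφi.comp ((AffineMap.lineMap_injective ℝ (hp.ne hne)).comp Subtype.val_injective)
  arc_ends e _ := by
    conv_lhs => rw [← show s(e.out.1, e.out.2) = e from Quot.out_eq e]
    simp
  interior_avoids e he t h₀ h₁ := by
    rintro ⟨w, hw⟩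
    exact hv e he w (hφi hw ▸ lineMap_mem_edgeInterior e (lt_of_le_of_ne t.2.1 h₀.symm)
      (lt_of_le_of_ne t.2.2 h₁))

theorem isNearlyPlanar_of_segments {x : ℕ} (hp : Function.Injective p)
    (hv : ∀ e ∈ G.edgeSet, ∀ w, p w ∉ edgeInterior p e)
    (hcross : ∀ e ∈ G.edgeSet, {q : Sym2 V × ℂ | q.1 ∈ G.edgeSet ∧ q.1 ≠ e ∧
      q.2 ∈ edgeInterior p e ∧ q.2 ∈ edgeInterior p q.1}.encard ≤ x) :
    IsNearlyPlanar x G := by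
  obtain ⟨φ, hφ, hφi⟩ := exists_continuous_injective_unitSphere
  let D := Drawing.ofSegments hφ hφi hp hv
  have interior {e : Sym2 V} {z : unitSphere} (hz : z ∈ range (D.arc e))
      (hvertex : z ∉ range D.vmap) : ∃ y ∈ edgeInterior p e, φ y = z := by
    obtain ⟨t, rfl⟩ := hz
    refine ⟨_, lineMap_mem_edgeInterior e (lt_of_le_of_ne t.2.1 fun h ↦ ?_)
      (lt_of_le_of_ne t.2.2 fun h ↦ ?_), rfl⟩
    · exact hvertex ⟨e.out.1, by simp [D, Drawing.ofSegments, ← h]⟩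
    · exact hvertex ⟨e.out.2, by simp [D, Drawing.ofSegments, h]⟩
  refine isNearlyPlanar_iff_encard.2 ⟨D, fun e he ↦ (encard_le_encard ?_).trans
    ((encard_image_le (Prod.map id φ) _).trans (hcross e he))⟩
  rintro ⟨e', z⟩ ⟨he', hne, hz, hz', hvertex⟩
  obtain ⟨y, hy, rfl⟩ := interior hz hvertex
  obtain ⟨y', hy', hyy'⟩ := interior hz' hvertex
  exact ⟨(e', y), ⟨he', hne, hy, hφi hyy' ▸ hy'⟩, rfl⟩

end Segments

/-! ### The fanned king's graph -/

/-- The king's graph on the quadrant: points whose coordinates differ by at most one. -/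
def kingGraph : SimpleGraph (ℕ × ℕ) where
  Adj a b := a ≠ b ∧ (a.1 ≤ b.1 + 1 ∧ b.1 ≤ a.1 + 1) ∧ a.2 ≤ b.2 + 1 ∧ b.2 ≤ a.2 + 1
  symm := ⟨fun _ _ h ↦ ⟨h.1.symm, h.2.1.symm, h.2.2.symm⟩⟩
  loopless := ⟨fun _ h ↦ h.1 rfl⟩

theorem kingGraph_adj {a b : ℕ × ℕ} : kingGraph.Adj a b ↔
    a ≠ b ∧ (a.1 ≤ b.1 + 1 ∧ b.1 ≤ a.1 + 1) ∧ a.2 ≤ b.2 + 1 ∧ b.2 ≤ a.2 + 1 :=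
  Iff.rfl

/-- The king's graph together with a hub `i` for each `i : ℕ`, joined to the points `(m, 0)` of the
bottom row with `g m = i`. -/
def fannedKingGraph (g : ℕ → ℕ) : SimpleGraph (ℕ ⊕ ℕ × ℕ) where
  Adj
    | .inl _, .inl _ => False
    | .inl i, .inr b => b.2 = 0 ∧ g b.1 = i
    | .inr a, .inl i => a.2 = 0 ∧ g a.1 = i
    | .inr a, .inr b => kingGraph.Adj a b
  symm := ⟨by rintro (i | a) (j | b) h <;> first | exact h | exact kingGraph.adj_symm h⟩
  loopless := ⟨by rintro (i | a) h <;> first | exact h | exact kingGraph.irrefl h⟩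

/-- The integer points of the closed first quadrant, as complex numbers. -/
def gridPoint (a : ℕ × ℕ) : ℂ := ⟨a.1, a.2⟩

/-- The placement of the vertices of a fanned king's graph in the plane: the hubs form a row below
the grid. -/
def fannedGridPoint : ℕ ⊕ ℕ × ℕ → ℂ
  | .inl i => ⟨i, -1⟩
  | .inr a => gridPoint a

/-- `KingEdgeAt i j α β e` says that `e` is one of the two diagonals, the bottom or the left side of
the unit cell with lower left corner `(i, j)`, and that its interior contains the point of the cell
at offset `(α, β)`. -/
inductive KingEdgeAt (i j : ℕ) (α β : ℝ) : Sym2 (ℕ × ℕ) → Prop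
  | bottom (hα : 0 < α) (hβ : β = 0) : KingEdgeAt i j α β s((i, j), (i + 1, j))
  | left (hα : α = 0) (hβ : 0 < β) : KingEdgeAt i j α β s((i, j), (i, j + 1))
  | diagonal (hα : 0 < α) (hβ : β = α) : KingEdgeAt i j α β s((i, j), (i + 1, j + 1))
  | antidiagonal (hα : 0 < α) (hβ : β = 1 - α) : KingEdgeAt i j α β s((i + 1, j), (i, j + 1))

theorem kingGraph_edge_cases {e : Sym2 (ℕ × ℕ)} (he : e ∈ kingGraph.edgeSet) :
    ∃ i j, e = s((i, j), (i + 1, j)) ∨ e = s((i, j), (i, j + 1)) ∨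
      e = s((i, j), (i + 1, j + 1)) ∨ e = s((i + 1, j), (i, j + 1)) := by
  induction e with
  | _ a b =>
    rw [SimpleGraph.mem_edgeSet, kingGraph_adj] at he
    obtain ⟨hne, h₁, h₂⟩ := he
    refine ⟨min a.1 b.1, min a.2 b.2, ?_⟩
    simp only [Ne, Sym2.eq_iff, Prod.ext_iff] at hne ⊢
    omega

theorem exists_kingEdgeAt {e : Sym2 (ℕ × ℕ)} (he : e ∈ kingGraph.edgeSet) {z : ℂ}
    (hz : z ∈ edgeInterior gridPoint e) :
    ∃ i j : ℕ, ∃ α ∈ Ico (0 : ℝ) 1, ∃ β ∈ Ico (0 : ℝ) 1,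
      z = ⟨i + α, j + β⟩ ∧ KingEdgeAt i j α β e := by
  obtain ⟨i, j, rfl | rfl | rfl | rfl⟩ := kingGraph_edge_cases he <;>
    obtain ⟨s, t, hs, ht, hst, rfl⟩ := hz <;>
    obtain rfl : s = 1 - t := by linarith
  · refine ⟨i, j, t, ⟨ht.le, by linarith⟩, 0, by simp, ?_, .bottom ht rfl⟩
    apply Complex.ext <;> simp [gridPoint] <;> ring
  · refine ⟨i, j, 0, by simp, t, ⟨ht.le, by linarith⟩, ?_, .left rfl ht⟩
    apply Complex.ext <;> simp [gridPoint] <;> ring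
  · refine ⟨i, j, t, ⟨ht.le, by linarith⟩, t, ⟨ht.le, by linarith⟩, ?_, .diagonal ht rfl⟩
    apply Complex.ext <;> simp [gridPoint] <;> ring
  · refine ⟨i, j, 1 - t, ⟨hs.le, by linarith⟩, t, ⟨ht.le, by linarith⟩, ?_,
      .antidiagonal hs (by ring)⟩
    apply Complex.ext <;> simp [gridPoint] <;> ring

theorem eq_and_eq_of_natCast_add_eq {m n : ℕ} {α β : ℝ} (hα : α ∈ Ico (0 : ℝ) 1)
    (hβ : β ∈ Ico (0 : ℝ) 1) (h : (m : ℝ) + α = n + β) : m = n ∧ α = β := by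
  obtain rfl : m = n := by
    have h₁ : (m : ℝ) < n + 1 := by linarith [hα.1, hβ.2]
    have h₂ : (n : ℝ) < m + 1 := by linarith [hα.2, hβ.1]
    norm_cast at h₁ h₂
    omega
  exact ⟨rfl, by linarith⟩

theorem exists_diagonal_of_mem_edgeInterior {e e' : Sym2 (ℕ × ℕ)} (he : e ∈ kingGraph.edgeSet)
    (he' : e' ∈ kingGraph.edgeSet) (hne : e' ≠ e) {z : ℂ} (hz : z ∈ edgeInterior gridPoint e)
    (hz' : z ∈ edgeInterior gridPoint e') :
    ∃ i j : ℕ, z = ⟨i + 1 / 2, j + 1 / 2⟩ ∧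
      (e = s((i, j), (i + 1, j + 1)) ∧ e' = s((i + 1, j), (i, j + 1)) ∨
        e = s((i + 1, j), (i, j + 1)) ∧ e' = s((i, j), (i + 1, j + 1))) := by
  obtain ⟨i, j, α, hα, β, hβ, rfl, h⟩ := exists_kingEdgeAt he hz
  obtain ⟨i', j', α', hα', β', hβ', hzz, h'⟩ := exists_kingEdgeAt he' hz'
  obtain ⟨hre, him⟩ := Complex.mk.inj hzz
  obtain ⟨rfl, rfl⟩ := eq_and_eq_of_natCast_add_eq hα hα' hre
  obtain ⟨rfl, rfl⟩ := eq_and_eq_of_natCast_add_eq hβ hβ' him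
  have centre (h : β = α) (h' : β = 1 - α) : (⟨i + α, j + β⟩ : ℂ) = ⟨i + 1 / 2, j + 1 / 2⟩ := by
    obtain rfl : α = 1 / 2 := by linarith
    rw [h]
  refine ⟨i, j, ?_⟩
  cases h <;> cases h' <;> first
    | exact absurd rfl hne
    | exact ⟨centre ‹_› ‹_›, .inl ⟨rfl, rfl⟩⟩
    | exact ⟨centre ‹_› ‹_›, .inr ⟨rfl, rfl⟩⟩
    | (exfalso; linarith [hα.2, hβ.2])

theorem gridPoint_notMem_edgeInterior {e : Sym2 (ℕ × ℕ)} (he : e ∈ kingGraph.edgeSet)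
    (a : ℕ × ℕ) : gridPoint a ∉ edgeInterior gridPoint e := by
  intro h
  obtain ⟨i, j, α, hα, β, hβ, hz, h⟩ := exists_kingEdgeAt he h
  obtain ⟨hre, him⟩ := Complex.mk.inj hz
  have hα₀ := (eq_and_eq_of_natCast_add_eq (by simp) hα ((add_zero _).trans hre)).2
  have hβ₀ := (eq_and_eq_of_natCast_add_eq (by simp) hβ ((add_zero _).trans him)).2
  cases h <;> linarith

theorem eq_and_eq_of_mem_edgeInterior {e e₁ e₂ : Sym2 (ℕ × ℕ)} {z₁ z₂ : ℂ}
    (he : e ∈ kingGraph.edgeSet) (he₁ : e₁ ∈ kingGraph.edgeSet) (he₂ : e₂ ∈ kingGraph.edgeSet)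
    (hne₁ : e₁ ≠ e) (hne₂ : e₂ ≠ e) (hz₁ : z₁ ∈ edgeInterior gridPoint e)
    (hz₁' : z₁ ∈ edgeInterior gridPoint e₁) (hz₂ : z₂ ∈ edgeInterior gridPoint e)
    (hz₂' : z₂ ∈ edgeInterior gridPoint e₂) : e₁ = e₂ ∧ z₁ = z₂ := by
  obtain ⟨i, j, rfl, h⟩ := exists_diagonal_of_mem_edgeInterior he he₁ hne₁ hz₁ hz₁'
  obtain ⟨k, l, rfl, h'⟩ := exists_diagonal_of_mem_edgeInterior he he₂ hne₂ hz₂ hz₂'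
  obtain ⟨rfl, rfl⟩ : i = k ∧ j = l := by
    rcases h with ⟨rfl, -⟩ | ⟨rfl, -⟩ <;> rcases h' with ⟨h', -⟩ | ⟨h', -⟩ <;>
      simp only [Sym2.eq_iff, Prod.mk.injEq] at h' <;> omega
  refine ⟨?_, rfl⟩
  rcases h with ⟨rfl, rfl⟩ | ⟨rfl, rfl⟩ <;> rcases h' with ⟨h', rfl⟩ | ⟨h', rfl⟩ <;>
    first | rfl | (simp only [Sym2.eq_iff, Prod.mk.injEq] at h'; omega)

theorem im_nonneg_of_mem_edgeInterior_gridPoint {e : Sym2 (ℕ × ℕ)} (he : e ∈ kingGraph.edgeSet)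
    {z : ℂ} (hz : z ∈ edgeInterior gridPoint e) : 0 ≤ z.im := by
  obtain ⟨i, j, α, -, β, hβ, rfl, -⟩ := exists_kingEdgeAt he hz
  exact add_nonneg j.cast_nonneg hβ.1

theorem fannedKingGraph_edge_cases {g : ℕ → ℕ} {e : Sym2 (ℕ ⊕ ℕ × ℕ)}
    (he : e ∈ (fannedKingGraph g).edgeSet) :
    (∃ e₀ ∈ kingGraph.edgeSet, e = e₀.map .inr) ∨ ∃ m, e = s(.inl (g m), .inr (m, 0)) := by
  induction e with
  | _ u v =>
    obtain i | ⟨m, k⟩ := u <;> obtain j | ⟨n, l⟩ := v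
    · exact he.elim
    · obtain ⟨rfl, rfl⟩ := he
      exact .inr ⟨n, rfl⟩
    · obtain ⟨rfl, rfl⟩ := he
      exact .inr ⟨m, Sym2.eq_swap⟩
    · exact .inl ⟨s((m, k), (n, l)), he, rfl⟩

theorem im_mem_Ioo_and_re_eq_of_mem_edgeInterior {i m : ℕ} {z : ℂ}
    (hz : z ∈ edgeInterior fannedGridPoint s(.inl i, .inr (m, 0))) :
    z.im ∈ Ioo (-1) 0 ∧ z.re = -z.im * i + (1 + z.im) * m := by
  obtain ⟨s, t, hs, ht, hst, rfl⟩ := hz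
  obtain rfl : t = 1 - s := by linarith
  simp only [fannedGridPoint, gridPoint, Complex.add_re, Complex.add_im, Complex.smul_re,
    Complex.smul_im, smul_eq_mul, Nat.cast_zero, mem_Ioo]
  exact ⟨⟨by linarith, by linarith⟩, by ring⟩

theorem disjoint_edgeInterior_of_lt {g : ℕ → ℕ} (hg : Monotone g) {m n : ℕ} (hmn : m < n) :
    Disjoint (edgeInterior fannedGridPoint s(.inl (g m), .inr (m, 0)))
      (edgeInterior fannedGridPoint s(.inl (g n), .inr (n, 0))) := by
  refine disjoint_left.2 fun z hm hn ↦ ?_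
  obtain ⟨hz, hm⟩ := im_mem_Ioo_and_re_eq_of_mem_edgeInterior hm
  obtain ⟨-, hn⟩ := im_mem_Ioo_and_re_eq_of_mem_edgeInterior hn
  have hub : -z.im * g m ≤ -z.im * g n :=
    mul_le_mul_of_nonneg_left (by exact_mod_cast hg hmn.le) (by linarith [hz.2])
  have bottom : (1 + z.im) * m < (1 + z.im) * n :=
    mul_lt_mul_of_pos_left (by exact_mod_cast hmn) (by linarith [hz.1])
  linarith

theorem fannedGridPoint_injective : Function.Injective fannedGridPoint := by
  rintro (i | a) (j | b) h <;> obtain ⟨hre, him⟩ := Complex.mk.inj h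
  · exact congrArg _ (Nat.cast_injective hre)
  · linarith [b.2.cast_nonneg (α := ℝ)]
  · linarith [a.2.cast_nonneg (α := ℝ)]
  · exact congrArg _ (Prod.ext (Nat.cast_injective hre) (Nat.cast_injective him))

theorem fannedGridPoint_notMem_edgeInterior {g : ℕ → ℕ} {e : Sym2 (ℕ ⊕ ℕ × ℕ)}
    (he : e ∈ (fannedKingGraph g).edgeSet) (v : ℕ ⊕ ℕ × ℕ) :
    fannedGridPoint v ∉ edgeInterior fannedGridPoint e := by
  intro hv
  obtain ⟨e, he₀, rfl⟩ | ⟨m, rfl⟩ := fannedKingGraph_edge_cases he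
  · rw [edgeInterior_map] at hv
    obtain i | a := v
    · exact absurd (im_nonneg_of_mem_edgeInterior_gridPoint he₀ hv) (by simp [fannedGridPoint])
    · exact gridPoint_notMem_edgeInterior he₀ a hv
  · have him := (im_mem_Ioo_and_re_eq_of_mem_edgeInterior hv).1
    obtain i | a := v
    · exact lt_irrefl _ him.1
    · exact him.2.not_ge a.2.cast_nonneg

theorem exists_map_inr_of_mem_edgeInterior {g : ℕ → ℕ} (hg : Monotone g)
    {e e' : Sym2 (ℕ ⊕ ℕ × ℕ)} (he : e ∈ (fannedKingGraph g).edgeSet)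
    (he' : e' ∈ (fannedKingGraph g).edgeSet) (hne : e' ≠ e) {z : ℂ}
    (hz : z ∈ edgeInterior fannedGridPoint e) (hz' : z ∈ edgeInterior fannedGridPoint e') :
    ∃ e₀ ∈ kingGraph.edgeSet, e = e₀.map .inr ∧ z ∈ edgeInterior gridPoint e₀ := by
  obtain ⟨e, he₀, rfl⟩ | ⟨m, rfl⟩ := fannedKingGraph_edge_cases he
  · rw [edgeInterior_map] at hz
    exact ⟨e, he₀, rfl, hz⟩
  have hneg := (im_mem_Ioo_and_re_eq_of_mem_edgeInterior hz).1.2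
  obtain ⟨e', he₀', rfl⟩ | ⟨n, rfl⟩ := fannedKingGraph_edge_cases he'
  · rw [edgeInterior_map] at hz'
    exact absurd hneg (im_nonneg_of_mem_edgeInterior_gridPoint he₀' hz').not_gt
  · obtain hmn | rfl | hmn := lt_trichotomy m n
    · exact absurd hz' (disjoint_left.1 (disjoint_edgeInterior_of_lt hg hmn) hz)
    · exact absurd rfl hne
    · exact absurd hz (disjoint_left.1 (disjoint_edgeInterior_of_lt hg hmn) hz')

theorem isNearlyPlanar_one_fannedKingGraph {g : ℕ → ℕ} (hg : Monotone g) :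
    IsNearlyPlanar 1 (fannedKingGraph g) := by
  refine isNearlyPlanar_of_segments fannedGridPoint_injective
    (fun _ ↦ fannedGridPoint_notMem_edgeInterior) fun e he ↦ encard_le_one_iff.2 ?_
  rintro ⟨e₁, z₁⟩ ⟨e₂, z₂⟩ ⟨he₁, hne₁, hz₁, hz₁'⟩ ⟨he₂, hne₂, hz₂, hz₂'⟩
  obtain ⟨f, hf, rfl, hzf⟩ := exists_map_inr_of_mem_edgeInterior hg he he₁ hne₁ hz₁ hz₁'
  obtain ⟨f₁, hf₁, rfl, hzf₁⟩ :=
    exists_map_inr_of_mem_edgeInterior hg he₁ he hne₁.symm hz₁' hz₁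
  obtain ⟨f₂, hf₂, rfl, hzf₂⟩ :=
    exists_map_inr_of_mem_edgeInterior hg he₂ he hne₂.symm hz₂' hz₂
  rw [edgeInterior_map] at hz₂
  obtain ⟨rfl, rfl⟩ := eq_and_eq_of_mem_edgeInterior hf hf₁ hf₂ (mt (congrArg _) hne₁)
    (mt (congrArg _) hne₂) hzf hzf₁ hz₂ hzf₂
  rfl

/-! ### Finite boards and their crosses -/

section Connected

variable {U V : Type*} {H : SimpleGraph U} {G : SimpleGraph V}

theorem connected_induce_range (hH : H.Connected) (f : H →g G) :
    (G.induce (range f)).Connected :=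
  hH.map (⟨rangeFactorization f, f.map_adj⟩ : H →g G.induce (range f))
    rangeFactorization_surjective

theorem connected_induce_image {s : Set U} (hs : (H.induce s).Connected) (f : H →g G) :
    (G.induce (f '' s)).Connected := by
  have h := connected_induce_range hs (f.comp (SimpleGraph.Embedding.induce s).toHom)
  rwa [show range (f.comp (SimpleGraph.Embedding.induce s).toHom) = f '' s by
    ext; simp] at h

theorem exists_isPath_support_subset {s : Set V} (hs : (G.induce s).Connected) {u v : V}
    (hu : u ∈ s) (hv : v ∈ s) : ∃ P : G.Walk u v, P.IsPath ∧ ∀ w ∈ P.support, w ∈ s := by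
  classical
  obtain ⟨Q, hQ⟩ := (hs ⟨u, hu⟩ ⟨v, hv⟩).exists_isPath
  refine ⟨Q.map (SimpleGraph.Embedding.induce s).toHom,
    hQ.map (SimpleGraph.Embedding.induce (G := G) s).injective, fun w hw ↦ ?_⟩
  obtain ⟨z, -, rfl⟩ := List.mem_map.1 (SimpleGraph.Walk.support_map _ Q ▸ hw)
  exact z.2

theorem isTopMinor_of_connected {τ : U → V} (hτ : Function.Injective τ) (S : Sym2 U → Set V)
    (hconn : ∀ e ∈ H.edgeSet, (G.induce (S e)).Connected) (hmem : ∀ u e, τ u ∈ S e ↔ u ∈ e)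
    (hdisj : ∀ e e', e ≠ e' → S e ∩ S e' ⊆ range τ) : IsTopMinor H G := by
  have path ⦃x y : U⦄ (h : H.Adj x y) :
      ∃ P : G.Walk (τ x) (τ y), P.IsPath ∧ ∀ w ∈ P.support, w ∈ S s(x, y) :=
    exists_isPath_support_subset (hconn _ h) ((hmem x _).2 (Sym2.mem_mk_left x y))
      ((hmem y _).2 (Sym2.mem_mk_right x y))
  choose P hP hPS using path
  refine ⟨τ, hτ, P, hP, ?_, fun x y x' y' h h' hne v hv hv' ↦
    hdisj _ _ hne ⟨hPS h v hv, hPS h' v hv'⟩⟩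
  rintro x y h _ hv ⟨u, rfl⟩
  exact (Sym2.mem_iff.1 ((hmem u _).1 (hPS h _ hv))).imp (congrArg τ) (congrArg τ)

end Connected

/-- The king's graph on a board with `n` rows and `n` columns. -/
def kingBoard (n : ℕ) : SimpleGraph (Fin n × Fin n) :=
  kingGraph.comap (Prod.map Fin.val Fin.val)

theorem kingBoard_adj {n : ℕ} {a b : Fin n × Fin n} : (kingBoard n).Adj a b ↔
    a ≠ b ∧ ((a.1 : ℕ) ≤ b.1 + 1 ∧ (b.1 : ℕ) ≤ a.1 + 1) ∧
      (a.2 : ℕ) ≤ b.2 + 1 ∧ (b.2 : ℕ) ≤ a.2 + 1 := by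
  have hinj : Function.Injective (Prod.map Fin.val Fin.val : Fin n × Fin n → ℕ × ℕ) :=
    Fin.val_injective.prodMap Fin.val_injective
  simp [kingBoard, kingGraph_adj, hinj.ne_iff]

section Cross

variable {n : ℕ}

/-- The `r`-th of `n` zigzag paths running from the left side of the board to its right side through
the squares with even coordinate sum. -/
def zigzagRow (r : Fin n) : SimpleGraph.pathGraph (2 * n) →g kingBoard (2 * n) where
  toFun k := (k, ⟨2 * r + k % 2, by omega⟩)
  map_rel' {k l} h := by
    simp only [SimpleGraph.pathGraph_adj, kingBoard_adj, Ne, Prod.ext_iff, Fin.ext_iff] at h ⊢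
    omega

/-- The `c`-th of `n` zigzag paths running from the bottom of the board to its top through the
squares with odd coordinate sum. -/
def zigzagColumn (c : Fin n) : SimpleGraph.pathGraph (2 * n) →g kingBoard (2 * n) where
  toFun k := (⟨2 * c + (k + 1) % 2, by omega⟩, k)
  map_rel' {k l} h := by
    simp only [SimpleGraph.pathGraph_adj, kingBoard_adj, Ne, Prod.ext_iff, Fin.ext_iff] at h ⊢
    omega

theorem zigzagRow_adj_zigzagColumn (r c : Fin n) :
    (kingBoard (2 * n)).Adj (zigzagRow r ⟨2 * c, by omega⟩) (zigzagColumn c ⟨2 * r, by omega⟩) := by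
  simp only [kingBoard_adj, zigzagRow, zigzagColumn, RelHom.coeFn_mk, Ne, Prod.ext_iff, Fin.ext_iff]
  omega

/-- The common index of the zigzag row or zigzag column through a square of the board. The squares
of index `u` form the `u`-th *cross*. -/
def crossIndex (a : Fin (2 * n) × Fin (2 * n)) : Fin n :=
  if (a.1 : ℕ) % 2 = a.2 % 2 then ⟨a.2 / 2, by omega⟩ else ⟨a.1 / 2, by omega⟩

theorem crossIndex_zigzagRow (r : Fin n) (k : Fin (2 * n)) : crossIndex (zigzagRow r k) = r := by
  grind [crossIndex, zigzagRow, RelHom.coeFn_mk]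

theorem crossIndex_zigzagColumn (c : Fin n) (k : Fin (2 * n)) :
    crossIndex (zigzagColumn c k) = c := by
  grind [crossIndex, zigzagColumn, RelHom.coeFn_mk]

theorem crossIndex_preimage_singleton (u : Fin n) :
    crossIndex ⁻¹' {u} = range (zigzagRow u) ∪ range (zigzagColumn u) := by
  ext a
  constructor
  · rintro rfl
    by_cases h : (a.1 : ℕ) % 2 = a.2 % 2
    · refine .inl ⟨a.1, ?_⟩
      simp only [zigzagRow, crossIndex, h, if_true, RelHom.coeFn_mk, Prod.ext_iff, Fin.ext_iff,
        true_and]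
      omega
    · refine .inr ⟨a.2, ?_⟩
      simp only [zigzagColumn, crossIndex, h, if_false, RelHom.coeFn_mk, Prod.ext_iff, Fin.ext_iff,
        and_true]
      omega
  · rintro (⟨k, rfl⟩ | ⟨k, rfl⟩)
    · exact crossIndex_zigzagRow u k
    · exact crossIndex_zigzagColumn u k

theorem connected_induce_crossIndex_preimage (u : Fin n) :
    ((kingBoard (2 * n)).induce (crossIndex ⁻¹' {u})).Connected := by
  have hpath := SimpleGraph.pathGraph_preconnected (2 * n)
  have : Nonempty (Fin (2 * n)) := ⟨⟨u, by omega⟩⟩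
  rw [crossIndex_preimage_singleton]
  exact SimpleGraph.connected_induce_union
    (connected_induce_range ⟨hpath⟩ (zigzagRow u)).preconnected
    (connected_induce_range ⟨hpath⟩ (zigzagColumn u)).preconnected
    (mem_range_self _) (mem_range_self _) (zigzagRow_adj_zigzagColumn u u)

theorem exists_adj_crossIndex_eq (u v : Fin n) :
    ∃ a b, (kingBoard (2 * n)).Adj a b ∧ crossIndex a = u ∧ crossIndex b = v :=
  ⟨_, _, zigzagRow_adj_zigzagColumn u v, crossIndex_zigzagRow u _, crossIndex_zigzagColumn v _⟩

theorem top_isContractionOf_kingBoard :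
    IsContractionOf (⊤ : SimpleGraph (Fin n)) (kingBoard (2 * n)) :=
  ⟨crossIndex, fun u ↦ (exists_adj_crossIndex_eq u u).imp fun _ ⟨_, _, h, _⟩ ↦ h,
    connected_induce_crossIndex_preimage,
    fun u v ↦ ⟨fun h ↦ ⟨h.ne, exists_adj_crossIndex_eq u v⟩, And.left⟩⟩

end Cross

/-- A finite fanned king's graph: each of the `n` hubs is joined to `2 * n` consecutive squares of
the bottom row, hence to the zigzag columns numbered `finProdFinEquiv (i, j)` with `j : Fin n`. -/
def fannedKingBoard (n : ℕ) : SimpleGraph (Fin n ⊕ Fin (2 * (n * n)) × Fin (2 * (n * n))) :=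
  (fannedKingGraph (· / (2 * n))).comap (Sum.map Fin.val (Prod.map Fin.val Fin.val))

theorem isNearlyPlanar_one_fannedKingBoard (n : ℕ) : IsNearlyPlanar 1 (fannedKingBoard n) :=
  (isNearlyPlanar_one_fannedKingGraph fun _ _ h ↦ Nat.div_le_div_right h).of_isContained
    ⟨(SimpleGraph.Embedding.comap
      ⟨_, Fin.val_injective.sumMap (Fin.val_injective.prodMap Fin.val_injective)⟩ _).toCopy⟩

theorem isNearlyPlanar_one_kingBoard (n : ℕ) : IsNearlyPlanar 1 (kingBoard n) :=
  (isNearlyPlanar_one_fannedKingGraph monotone_id).of_isContained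
    ⟨⟨⟨.inr ∘ Prod.map Fin.val Fin.val, id⟩,
      Sum.inr_injective.comp (Fin.val_injective.prodMap Fin.val_injective)⟩⟩

section Fan

variable {n : ℕ}

/-- The inclusion of the board in the fanned board. -/
def fannedKingBoardInr (n : ℕ) : kingBoard (2 * (n * n)) →g fannedKingBoard n :=
  ⟨.inr, id⟩

theorem hub_adj_zigzagColumn (i j : Fin n) :
    (fannedKingBoard n).Adj (.inl i) (.inr (zigzagColumn (finProdFinEquiv (i, j))
      ⟨0, Nat.mul_pos two_pos (finProdFinEquiv (i, j)).pos⟩)) := by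
  have hdiv : (2 * (j + n * i) + 1) / (2 * n) = (i : ℕ) :=
    Nat.div_eq_of_lt_le (by linarith) (by nlinarith [j.isLt])
  exact ⟨rfl, hdiv⟩

/-- The unordered pair `s(i, j)` for which the cross through a square of the board is numbered
`finProdFinEquiv (i, j)`. -/
def crossEdge (a : Fin (2 * (n * n)) × Fin (2 * (n * n))) : Sym2 (Fin n) :=
  s((finProdFinEquiv.symm (crossIndex a)).1, (finProdFinEquiv.symm (crossIndex a)).2)

/-- The vertices reserved for the path replacing the edge `e`: the hubs at its ends, and the crosses
numbered by the orderings of `e`. -/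
def fanRegion (e : Sym2 (Fin n)) : Set (Fin n ⊕ Fin (2 * (n * n)) × Fin (2 * (n * n))) :=
  {v | v.elim (· ∈ e) (crossEdge · = e)}

theorem connected_induce_hub_union_cross (i j : Fin n) :
    ((fannedKingBoard n).induce
      ({.inl i} ∪ .inr '' (crossIndex ⁻¹' {finProdFinEquiv (i, j)}))).Connected :=
  SimpleGraph.connected_induce_union .of_subsingleton
    (connected_induce_image (connected_induce_crossIndex_preimage _)
      (fannedKingBoardInr n)).preconnected
    rfl (mem_image_of_mem _ (crossIndex_zigzagColumn _ _)) (hub_adj_zigzagColumn i j)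

theorem fanRegion_mk (i j : Fin n) :
    fanRegion s(i, j) = ({.inl i} ∪ .inr '' (crossIndex ⁻¹' {finProdFinEquiv (i, j)})) ∪
      ({.inl j} ∪ .inr '' (crossIndex ⁻¹' {finProdFinEquiv (j, i)})) := by
  ext (k | a)
  · simp [fanRegion, or_comm]
  · simp [fanRegion, crossEdge, ← Equiv.symm_apply_eq, Prod.ext_iff, -finProdFinEquiv_symm_apply]

theorem connected_induce_fanRegion (e : Sym2 (Fin n)) :
    ((fannedKingBoard n).induce (fanRegion e)).Connected := by
  induction e with
  | _ i j =>
    obtain ⟨a, b, hab, ha, hb⟩ :=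
      exists_adj_crossIndex_eq (finProdFinEquiv (i, j)) (finProdFinEquiv (j, i))
    rw [fanRegion_mk]
    exact SimpleGraph.connected_induce_union
      (connected_induce_hub_union_cross i j).preconnected
      (connected_induce_hub_union_cross j i).preconnected
      (.inr (mem_image_of_mem _ ha)) (.inr (mem_image_of_mem _ hb))
      ((fannedKingBoardInr n).map_adj hab)

theorem top_isTopMinor_fannedKingBoard (n : ℕ) :
    IsTopMinor (⊤ : SimpleGraph (Fin n)) (fannedKingBoard n) := by
  refine isTopMinor_of_connected Sum.inl_injective fanRegion
    (fun e _ ↦ connected_induce_fanRegion e) (fun _ _ ↦ Iff.rfl) ?_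
  rintro e e' hne (i | a) ⟨ha, ha'⟩
  · exact mem_range_self i
  · exact absurd (ha.symm.trans ha') hne

end Fan

end WBW

/-- Corollary 2, second part: for every `ξ ≥ 1`, the class of
`ξ`-nearly planar graphs is closed neither under topological minors nor under
contractions. -/
theorem nearlyPlanar_not_closed (x : ℕ) (hx : 1 ≤ x) :
    (∃ (A B : Type) (_ : Finite A) (_ : Finite B)
        (G : SimpleGraph A) (H : SimpleGraph B),
      WBW.IsNearlyPlanar x G ∧ WBW.IsTopMinor H G ∧ ¬ WBW.IsNearlyPlanar x H) ∧
    (∃ (A B : Type) (_ : Finite A) (_ : Finite B)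
        (G : SimpleGraph A) (H : SimpleGraph B),
      WBW.IsNearlyPlanar x G ∧ WBW.IsContractionOf H G ∧ ¬ WBW.IsNearlyPlanar x H) := by
  have hn : ¬ WBW.IsNearlyPlanar x (⊤ : SimpleGraph (Fin (30 * x + 6))) :=
    WBW.not_isNearlyPlanar_top (Fintype.card_fin _).ge
  exact ⟨⟨_, _, inferInstance, inferInstance, WBW.fannedKingBoard _, ⊤,
      (WBW.isNearlyPlanar_one_fannedKingBoard _).mono hx, WBW.top_isTopMinor_fannedKingBoard _, hn⟩,
    ⟨_, _, inferInstance, inferInstance, WBW.kingBoard _, ⊤,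
      (WBW.isNearlyPlanar_one_kingBoard _).mono hx, WBW.top_isContractionOf_kingBoard, hn⟩⟩
end
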